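/- Let n ≥ 2, let n−1 < s ≤ n, and let A ⊆ ℝⁿ be a Borel set with 0 < H^s(A) < ∞. Then there is a Borel set B ⊆ ℝⁿ with dimH B ≤ n−1 such that for every x ∈ ℝⁿ \ B, the set of unit vectors e ∈ S^{n−1} for which dimH( A ∩ { x + r·e : r ∈ ℝ } ) = s − (n−1) has positive (n−1)-dimensional Hausdorff measure in S^{n−1}. -/

import Mathlib

open MeasureTheory Metric Set
open scoped ENNReal RealInnerProductSpace

namespace LineSections
open Filter Topology
open scoped NNReal

section Content
variable {X : Type*} [MetricSpace X]

/-- The `t`-dimensional Hausdorff content. -/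
noncomputable def content (X : Type*) [MetricSpace X] (t : ℝ) : OuterMeasure X :=
  OuterMeasure.boundedBy fun S => ediam S ^ t

lemma content_closedBall_le {t : ℝ} (ht : 0 < t) (x : X) (r : ℝ) :
    content X t (closedBall x r) ≤ (2 * ENNReal.ofReal r) ^ t := by
  refine (OuterMeasure.boundedBy_le _).trans ?_
  gcongr
  refine ediam_le_of_forall_dist_le ?_ |>.trans (b := ENNReal.ofReal (2 * r)) ?_
  · intro y hy z hz
    have h1 := mem_closedBall.1 hy
    have h2 := mem_closedBall'.1 hz
    linarith [dist_triangle y x z]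
  · rw [ENNReal.ofReal_mul zero_le_two]; simp

lemma hausdorffMeasure_eq_zero_of_content_eq_zero [MeasurableSpace X] [BorelSpace X]
    {t : ℝ} (ht : 0 < t) {S : Set X} (hS : content X t S = 0) : μH[t] S = 0 := by
  have key : ∀ n : ℕ, ∃ T : ℕ → Set X, S ⊆ iUnion T ∧
      ∑' i, ediam (T i) ^ t < ((n : ℝ≥0∞) + 1)⁻¹ := by
    intro n
    have h : content X t S < ((n : ℝ≥0∞) + 1)⁻¹ := by
      rw [hS]; exact ENNReal.inv_pos.2 (by finiteness)
    rw [content, OuterMeasure.boundedBy_apply] at h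
    simp only [iInf_lt_iff] at h
    obtain ⟨T, hT, hlt⟩ := h
    refine ⟨T, hT, lt_of_le_of_lt (ENNReal.tsum_le_tsum fun i => ?_) hlt⟩
    rcases (T i).eq_empty_or_nonempty with h | h
    · simp [h, ht]
    · simp [h]
  choose T hT hsum using key
  have h0 : Tendsto (fun n : ℕ => ((n : ℝ≥0∞) + 1)⁻¹) atTop (𝓝 0) := by
    have := (tendsto_add_atTop_iff_nat 1).2 ENNReal.tendsto_inv_nat_nhds_zero
    simpa using this
  have hr : Tendsto (fun n : ℕ => (((n : ℝ≥0∞) + 1)⁻¹) ^ (1 / t)) atTop (𝓝 0) := by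
    have := ((ENNReal.continuous_rpow_const (y := 1 / t)).tendsto 0).comp h0
    simpa [Function.comp_def, ENNReal.zero_rpow_of_pos (inv_pos.2 ht)] using this
  have hle := Measure.hausdorffMeasure_le_liminf_tsum t S _ hr T
    (Eventually.of_forall fun n i => by
      have : ediam (T n i) ^ t ≤ ((n : ℝ≥0∞) + 1)⁻¹ :=
        (ENNReal.le_tsum i).trans (hsum n).le
      calc ediam (T n i) = (ediam (T n i) ^ t) ^ (1 / t) := by
            rw [← ENNReal.rpow_mul]; field_simp; simp
        _ ≤ _ := by gcongr)
    (Eventually.of_forall hT)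
  refine le_antisymm (hle.trans ?_) bot_le
  calc _ ≤ liminf (fun n : ℕ => ((n : ℝ≥0∞) + 1)⁻¹) atTop :=
        liminf_le_liminf (Eventually.of_forall fun n => (hsum n).le)
    _ = 0 := h0.liminf_eq

end Content

section Frostman
variable {X : Type*} [MetricSpace X] [MeasurableSpace X] [BorelSpace X]

/-- The set of points with uniformly large upper density carries at most half of the measure. -/
lemma hausdorffMeasure_large_density_le {s : ℝ} (hs : 0 < s) [SecondCountableTopology X] (A : Set X) :
    μH[s] {y | ∀ δ > 0, ∃ r, 0 < r ∧ r < δ ∧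
      2 * (12 * ENNReal.ofReal r) ^ s < μH[s] (A ∩ ball y r)} ≤ μH[s] A / 2 := by
  set G := {y | ∀ δ > 0, ∃ r, 0 < r ∧ r < δ ∧
      2 * (12 * ENNReal.ofReal r) ^ s < μH[s] (A ∩ ball y r)} with hG
  have key : ∀ n : ℕ, ∃ u : Set X, u.Countable ∧ ∃ r : X → ℝ, (∀ y ∈ u, r y < 1 / (n + 1)) ∧
      G ⊆ ⋃ y : u, closedBall (y : X) (6 * r y) ∧
      ∑' y : u, (12 * ENNReal.ofReal (r y)) ^ s ≤ μH[s] A / 2 := by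
    intro n
    have : ∀ y ∈ G, ∃ r, 0 < r ∧ r < 1 / ((n : ℝ) + 1) ∧
      2 * (12 * ENNReal.ofReal r) ^ s < μH[s] (A ∩ ball y r) :=
      fun y hy => hy _ (by positivity)
    choose! r hr0 hr1 hr2 using this
    obtain ⟨u, huG, hdis, hcov⟩ := Vitali.exists_disjoint_subfamily_covering_enlargement_closedBall
      G id r (1 / ((n : ℝ) + 1)) (fun a ha => (hr1 a ha).le) 6 (by norm_num)
    have hdis' : u.PairwiseDisjoint fun a => ball a (r a) :=
      hdis.mono fun a => ball_subset_closedBall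
    have hcount : u.Countable := hdis'.countable_of_isOpen (fun _ _ => isOpen_ball)
      (fun a ha => ⟨a, mem_ball_self (hr0 a (huG ha))⟩)
    refine ⟨u, hcount, r, fun y hy => hr1 y (huG hy), ?_, ?_⟩
    · intro y hy
      obtain ⟨b, hb, hsub⟩ := hcov y hy
      exact mem_iUnion.2 ⟨⟨b, hb⟩, hsub (mem_closedBall_self (hr0 y hy).le)⟩
    · have : Countable u := hcount.to_subtype
      have h1 : ∑' y : u, μH[s] (A ∩ ball (y : X) (r y)) ≤ μH[s] A := by
        have : ∀ y : u, μH[s] (A ∩ ball (y : X) (r y)) =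
            (Measure.restrict μH[s] A) (ball (y : X) (r y)) := by
          intro y
          rw [Measure.restrict_apply measurableSet_ball, inter_comm]
        simp_rw [this]
        rw [← measure_iUnion]
        · exact (measure_mono (subset_univ _)).trans (by simp)
        · intro a b hab
          exact hdis' a.2 b.2 (fun h => hab (Subtype.ext h))
        · exact fun _ => measurableSet_ball
      rw [ENNReal.le_div_iff_mul_le (by simp) (by simp), ← ENNReal.tsum_mul_right]
      refine (ENNReal.tsum_le_tsum fun y => ?_).trans h1
      rw [mul_comm]
      exact (hr2 y (huG y.2)).le
  choose u hcount r hr hcov hsum using key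
  have hc : ∀ n, Countable (u n) := fun n => (hcount n).to_subtype
  have hr0 : Tendsto (fun n : ℕ => ENNReal.ofReal (12 * (1 / ((n : ℝ) + 1)))) atTop (𝓝 0) := by
    have := (tendsto_one_div_add_atTop_nhds_zero_nat (𝕜 := ℝ)).const_mul 12
    simpa using ENNReal.tendsto_ofReal this
  have hdiam : ∀ n (y : u n), ediam (closedBall (y : X) (6 * r n y)) ≤
      12 * ENNReal.ofReal (r n y) := by
    intro n y
    refine (ediam_le_of_forall_dist_le (C := 12 * r n y) ?_).trans ?_
    · intro a ha b hb
      have h1 := mem_closedBall.1 ha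
      have h2 := mem_closedBall'.1 hb
      linarith [dist_triangle a y b]
    · rw [ENNReal.ofReal_mul (by norm_num)]; simp
  refine (Measure.hausdorffMeasure_le_liminf_tsum s G _ hr0
    (fun n (y : u n) => closedBall (y : X) (6 * r n y))
    (Eventually.of_forall fun n y => ?_) (Eventually.of_forall hcov)).trans ?_
  · refine (hdiam n y).trans ?_
    rw [ENNReal.ofReal_mul (by norm_num)]
    simp only [ENNReal.ofReal_ofNat]
    gcongr
    exact (hr n y y.2).le
  · calc _ ≤ liminf (fun _ : ℕ => μH[s] A / 2) atTop :=
        liminf_le_liminf (Eventually.of_forall fun n =>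
          (ENNReal.tsum_le_tsum fun y => by gcongr; exact hdiam n y).trans (hsum n))
      _ = _ := by simp

/-- A set of positive finite Hausdorff measure contains a compact set on which the Hausdorff
measure is positive and satisfies a Frostman condition. -/
lemma exists_isCompact_frostman [SecondCountableTopology X] [CompleteSpace X]
    {s : ℝ} (hs : 0 < s) (A : Set X) (hA : MeasurableSet A) (h0 : 0 < μH[s] A)
    (h1 : μH[s] A < ∞) :
    ∃ K ⊆ A, IsCompact K ∧ 0 < μH[s] K ∧ ∃ C : ℝ≥0∞, C ≠ ∞ ∧
      ∀ (y : X) (r : ℝ), 0 < r → μH[s] (K ∩ closedBall y r) ≤ C * ENNReal.ofReal r ^ s := by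
  set G := {y | ∀ δ > 0, ∃ r, 0 < r ∧ r < δ ∧
      2 * (12 * ENNReal.ofReal r) ^ s < μH[s] (A ∩ ball y r)} with hG
  have hGle := hausdorffMeasure_large_density_le hs A
  rw [← hG] at hGle
  set H : ℕ → Set X := fun j => {y | ∀ r, 0 < r → r < 1 / ((j : ℝ) + 1) →
    μH[s] (A ∩ ball y r) ≤ 2 * (12 * ENNReal.ofReal r) ^ s} with hH
  have hHclosed : ∀ j, IsClosed (H j) := by
    intro j
    simp only [hH, ofPred_forall]
    refine isClosed_iInter fun r => isClosed_iInter fun hr0 => isClosed_iInter fun hr1 => ?_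
    rw [← isOpen_compl_iff, isOpen_iff_mem_nhds]
    intro y hy
    simp only [mem_compl_iff, mem_ofPred_eq, not_le] at hy
    have hmono : Tendsto (fun n : ℕ => μH[s] (A ∩ ball y (r - 1 / ((n : ℝ) + 1)))) atTop
        (𝓝 (μH[s] (⋃ n : ℕ, A ∩ ball y (r - 1 / ((n : ℝ) + 1))))) := by
      apply tendsto_measure_iUnion_atTop
      intro a b hab
      apply inter_subset_inter_right
      apply ball_subset_ball
      have := one_div_le_one_div_of_le (by positivity : (0 : ℝ) < a + 1)
        (by gcongr : (a : ℝ) + 1 ≤ b + 1)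
      linarith
    have hU : (⋃ n : ℕ, A ∩ ball y (r - 1 / ((n : ℝ) + 1))) = A ∩ ball y r := by
      rw [← inter_iUnion]
      congr 1
      ext z
      simp only [mem_iUnion, mem_ball]
      constructor
      · rintro ⟨n, hn⟩
        have : (0 : ℝ) < 1 / ((n : ℝ) + 1) := by positivity
        linarith
      · intro hz
        obtain ⟨n, hn⟩ := exists_nat_one_div_lt (sub_pos.2 hz)
        exact ⟨n, by linarith⟩
    rw [hU] at hmono
    obtain ⟨n, hn⟩ := (hmono.eventually (lt_mem_nhds hy)).exists
    refine mem_of_superset (ball_mem_nhds y (by positivity : (0 : ℝ) < 1 / ((n : ℝ) + 1))) ?_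
    intro z hz
    simp only [mem_compl_iff, mem_ofPred_eq, not_le]
    refine hn.trans_le (measure_mono (inter_subset_inter_right _ ?_))
    apply ball_subset_ball'
    rw [mem_ball, dist_comm] at hz
    linarith
  obtain ⟨j, hj⟩ : ∃ j, 0 < μH[s] (A ∩ H j) := by
    by_contra! hcon
    have hz : μH[s] (⋃ j, A ∩ H j) = 0 := by
      rw [measure_iUnion_null_iff]; exact fun j => le_antisymm (hcon j) bot_le
    have hsub : A ⊆ (⋃ j, A ∩ H j) ∪ G := by
      intro y hy
      by_cases hyG : y ∈ G
      · exact Or.inr hyG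
      · left
        simp only [hG, mem_ofPred_eq, not_forall, not_exists, not_and, not_lt] at hyG
        obtain ⟨δ, hδ, h⟩ := hyG
        obtain ⟨n, hn⟩ := exists_nat_one_div_lt hδ
        exact mem_iUnion.2 ⟨n, hy, fun r hr0 hr1 => h r hr0 (hr1.trans hn)⟩
    have : μH[s] A ≤ μH[s] A / 2 := by
      calc μH[s] A ≤ μH[s] (⋃ j, A ∩ H j) + μH[s] G := (measure_mono hsub).trans
            (measure_union_le _ _)
        _ ≤ _ := by rw [hz, zero_add]; exact hGle
    exact absurd this (not_le.2 (ENNReal.half_lt_self h0.ne' h1.ne))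
  have hfin : IsFiniteMeasure (Measure.restrict μH[s] A) := ⟨by simpa using h1⟩
  obtain ⟨K, hKsub, hK, hKpos⟩ := (hA.inter (hHclosed j).measurableSet).exists_lt_isCompact
    (μ := Measure.restrict μH[s] A) (r := 0)
    (by rwa [Measure.restrict_apply (hA.inter (hHclosed j).measurableSet),
      inter_eq_self_of_subset_left inter_subset_left])
  rw [Measure.restrict_apply hK.measurableSet,
    inter_eq_self_of_subset_left (hKsub.trans inter_subset_left)] at hKpos
  have hKA : K ⊆ A := hKsub.trans inter_subset_left
  set ρ : ℝ := 1 / ((j : ℝ) + 1) / 4 with hρ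
  have hρ0 : 0 < ρ := by positivity
  refine ⟨K, hKA, hK, hKpos, 2 * 36 ^ s + μH[s] A / ENNReal.ofReal ρ ^ s, ?_, ?_⟩
  · have h2 : ENNReal.ofReal ρ ^ s ≠ 0 := by
      simp [ENNReal.rpow_eq_zero_iff, hρ0, hs]
    exact ENNReal.add_ne_top.2 ⟨ENNReal.mul_ne_top (by simp)
      (ENNReal.rpow_ne_top_of_nonneg hs.le (by simp)), (ENNReal.div_lt_top h1.ne h2).ne⟩
  · intro y r hr
    by_cases hrρ : r < ρ
    · rcases (K ∩ closedBall y r).eq_empty_or_nonempty with he | ⟨z, hzK, hz⟩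
      · simp [he]
      · have hzH := (hKsub hzK).2 (3 * r) (by positivity)
          (by have : ρ * 4 = 1 / ((j : ℝ) + 1) := by rw [hρ]; ring
              linarith)
        have hsub : K ∩ closedBall y r ⊆ A ∩ ball z (3 * r) := by
          refine inter_subset_inter hKA ?_
          intro w hw
          have h1 := mem_closedBall.1 hw
          have h2 := mem_closedBall'.1 hz
          rw [mem_ball]
          linarith [dist_triangle w y z]
        calc _ ≤ _ := (measure_mono hsub).trans hzH
          _ = 2 * 36 ^ s * ENNReal.ofReal r ^ s := by
            rw [mul_assoc, ← ENNReal.mul_rpow_of_nonneg _ _ hs.le,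
              ENNReal.ofReal_mul (by norm_num), ← mul_assoc]
            norm_num
          _ ≤ _ := by gcongr; exact le_self_add
    · push Not at hrρ
      have h2 : ENNReal.ofReal ρ ^ s ≠ 0 := by
        simp [ENNReal.rpow_eq_zero_iff, hρ0, hs]
      have h3 : ENNReal.ofReal ρ ^ s ≠ ∞ := ENNReal.rpow_ne_top_of_nonneg hs.le (by simp)
      calc μH[s] (K ∩ closedBall y r) ≤ μH[s] A := measure_mono (inter_subset_left.trans hKA)
        _ = μH[s] A / ENNReal.ofReal ρ ^ s * ENNReal.ofReal ρ ^ s :=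
          (ENNReal.div_mul_cancel h2 h3).symm
        _ ≤ _ := by gcongr; exact le_add_self

end Frostman

/-- The point where the line with slope `u` through `y` meets the hyperplane of height zero. -/
def shear {m : ℕ} (u : Fin m → ℝ) (y : (Fin m → ℝ) × ℝ) : Fin m → ℝ := y.1 - y.2 • u

lemma shear_sub {m : ℕ} (u : Fin m → ℝ) (y z : (Fin m → ℝ) × ℝ) :
    shear u (y - z) = shear u y - shear u z := by
  simp only [shear, Prod.fst_sub, Prod.snd_sub, sub_smul]; abel

@[fun_prop]
lemma continuous_shear {m : ℕ} :
    Continuous fun p : (Fin m → ℝ) × ((Fin m → ℝ) × ℝ) => shear p.1 p.2 := by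
  unfold shear; fun_prop

/-- An integrable positive continuous density on the space of slopes. -/
noncomputable def slopeDensity {m : ℕ} (u : Fin m → ℝ) : ℝ := (1 + ‖u‖) ^ (-((m : ℝ) + 1))

lemma slopeDensity_pos {m : ℕ} (u : Fin m → ℝ) : 0 < slopeDensity u := by
  unfold slopeDensity; positivity

lemma continuous_slopeDensity {m : ℕ} : Continuous (slopeDensity (m := m)) := by
  unfold slopeDensity
  refine Continuous.rpow_const (by fun_prop) fun u => Or.inl ?_
  positivity

/-- The measure on slopes with density `slopeDensity`. -/
noncomputable def slopeMeasure (m : ℕ) : Measure (Fin m → ℝ) :=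
  volume.withDensity fun u => ENNReal.ofReal (slopeDensity u)

instance (m : ℕ) : IsFiniteMeasure (slopeMeasure m) := by
  refine isFiniteMeasure_withDensity (ne_of_lt ?_)
  exact finite_integral_one_add_norm (by simp)

lemma ae_slopeMeasure_iff {m : ℕ} {p : (Fin m → ℝ) → Prop} :
    (∀ᵐ u ∂slopeMeasure m, p u) ↔ ∀ᵐ u, p u := by
  have h1 : slopeMeasure m ≪ volume := withDensity_absolutelyContinuous _ _
  have h2 : volume ≪ slopeMeasure m := withDensity_absolutelyContinuous'
    (continuous_slopeDensity.measurable.ennreal_ofReal.aemeasurable)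
    (Eventually.of_forall fun u => by simpa using slopeDensity_pos u)
  exact ⟨fun h => h2.ae_le h, fun h => h1.ae_le h⟩

/-- The constant in `slopeMeasure_shear_le`. -/
noncomputable def shearConst (m : ℕ) : ℝ≥0∞ := slopeMeasure m univ * 2 ^ m + 4 ^ m

lemma shearConst_ne_top (m : ℕ) : shearConst m ≠ ∞ := by
  unfold shearConst; finiteness

/-- Transversality of the family of projections along lines. -/
lemma slopeMeasure_shear_le {m : ℕ} (w : (Fin m → ℝ) × ℝ) {ρ : ℝ} (hρ : 0 < ρ) :
    slopeMeasure m {u | ‖shear u w‖ ≤ ρ} ≤ shearConst m * (ENNReal.ofReal ρ / ‖w‖ₑ) ^ m := by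
  obtain ⟨p, a⟩ := w
  set N := ‖((p, a) : (Fin m → ℝ) × ℝ)‖ with hN
  have hpN : ‖p‖ ≤ N := le_max_left _ _
  have haN : |a| ≤ N := le_max_right _ _
  rw [← ofReal_norm, ← hN]
  rcases le_or_gt N (2 * ρ) with h | h
  · have hhalf : (1 / 2 : ℝ≥0∞) ≤ ENNReal.ofReal ρ / ENNReal.ofReal N := by
      rw [ENNReal.le_div_iff_mul_le (by simp [hρ]) (by simp)]
      calc 1 / 2 * ENNReal.ofReal N ≤ 1 / 2 * ENNReal.ofReal (2 * ρ) := by gcongr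
        _ = 1 / 2 * 2 * ENNReal.ofReal ρ := by
          rw [ENNReal.ofReal_mul (by norm_num), mul_assoc]; simp
        _ = _ := by rw [ENNReal.div_mul_cancel (by simp) (by simp), one_mul]
    calc _ ≤ slopeMeasure m univ := measure_mono (subset_univ _)
      _ = slopeMeasure m univ * 2 ^ m * (1 / 2) ^ m := by
        rw [mul_assoc, ← mul_pow, ENNReal.mul_div_cancel (by simp) (by simp)]; simp
      _ ≤ _ := mul_le_mul' le_self_add (pow_le_pow_left' hhalf m)
  · have hN0 : 0 < N := by linarith
    have hu : ∀ u ∈ {u | ‖shear u (p, a)‖ ≤ ρ}, N ≤ 2 * (|a| * (1 + ‖u‖)) := by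
      intro u hu
      have hu : ‖p - a • u‖ ≤ ρ := hu
      have h1 : ‖p‖ ≤ ρ + |a| * ‖u‖ := by
        have := norm_add_le (p - a • u) (a • u)
        rw [sub_add_cancel, norm_smul, Real.norm_eq_abs] at this
        linarith
      have h2 : N ≤ ρ + |a| * (1 + ‖u‖) := by
        rw [hN, Prod.norm_def]
        apply max_le
        · simp only; linarith [abs_nonneg a]
        · simp only [Real.norm_eq_abs]; nlinarith [abs_nonneg a, norm_nonneg u]
      linarith
    by_cases ha : a = 0
    · subst ha
      have : {u : Fin m → ℝ | ‖shear u (p, 0)‖ ≤ ρ} = ∅ := by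
        ext u
        simp only [mem_empty_iff_false, iff_false]
        intro h'
        have := hu u h'
        simp at this; linarith
      rw [this]; simp
    have ha0 : 0 < |a| := abs_pos.2 ha
    have hset : {u : Fin m → ℝ | ‖shear u (p, a)‖ ≤ ρ} = closedBall (a⁻¹ • p) (ρ / |a|) := by
      ext u
      have : shear u (p, a) = -(a • (u - a⁻¹ • p)) := by
        simp [shear, smul_sub, smul_smul, ha]
      rw [mem_ofPred_eq, this, mem_closedBall, dist_eq_norm, norm_neg, norm_smul,
        Real.norm_eq_abs, le_div_iff₀ ha0, mul_comm]
    have hd : ∀ u ∈ {u | ‖shear u (p, a)‖ ≤ ρ},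
        ENNReal.ofReal (slopeDensity u) ≤ ENNReal.ofReal ((2 * |a| / N) ^ m) := by
      intro u hu'
      apply ENNReal.ofReal_le_ofReal
      have h1 : (0 : ℝ) < 1 + ‖u‖ := by positivity
      calc slopeDensity u ≤ (1 + ‖u‖) ^ (-(m : ℝ)) := by
            unfold slopeDensity
            exact Real.rpow_le_rpow_of_exponent_le (by linarith [norm_nonneg u]) (by linarith)
        _ = ((1 + ‖u‖)⁻¹) ^ m := by
            rw [Real.rpow_neg h1.le, Real.rpow_natCast, inv_pow]
        _ ≤ _ := by
            gcongr
            rw [inv_le_comm₀ h1 (by positivity), inv_div, div_le_iff₀ (by positivity)]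
            linarith [hu u hu']
    have hm : MeasurableSet {u : Fin m → ℝ | ‖shear u (p, a)‖ ≤ ρ} := by
      rw [hset]; exact measurableSet_closedBall
    rw [slopeMeasure, withDensity_apply _ hm]
    refine (setLIntegral_mono' hm hd).trans ?_
    rw [setLIntegral_const, hset, Real.volume_pi_closedBall _ (by positivity), Fintype.card_fin,
      ← ENNReal.ofReal_mul (by positivity), ← mul_pow, ENNReal.ofReal_pow (by positivity)]
    have : 2 * |a| / N * (2 * (ρ / |a|)) = 4 * (ρ / N) := by field_simp; ring
    rw [this, ENNReal.ofReal_mul (by norm_num), mul_pow, ENNReal.ofReal_div_of_pos hN0]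
    gcongr
    rw [shearConst]
    simp

/-- Greedy construction of weights saturating a finite system of packing constraints. -/
lemma exists_saturated_weights {ι κ : Type*} [DecidableEq ι] [Fintype κ] (S : κ → Finset ι)
    (b : κ → ℝ≥0) (Q : Finset ι) (hQ : ∀ i ∈ Q, ∃ k, i ∈ S k) :
    ∃ w : ι → ℝ≥0, (∀ k, ∑ i ∈ S k, w i ≤ b k) ∧
      ∀ i ∈ Q, ∃ k, i ∈ S k ∧ ∑ i ∈ S k, w i = b k := by
  classical
  induction Q using Finset.induction_on with
  | empty => exact ⟨fun _ => 0, by simp, by simp⟩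
  | insert i Q hi ih =>
    obtain ⟨w, hw, hsat⟩ := ih fun j hj => hQ j (Finset.mem_insert_of_mem hj)
    obtain ⟨k₀, hk₀⟩ := hQ i (Finset.mem_insert_self _ _)
    obtain ⟨k₁, hk₁, hmin⟩ := Finset.exists_min_image (Finset.univ.filter fun k => i ∈ S k)
      (fun k => b k - ∑ i ∈ S k, w i) ⟨k₀, by simpa using hk₀⟩
    simp only [Finset.mem_filter, Finset.mem_univ, true_and] at hk₁ hmin
    set ε := b k₁ - ∑ i ∈ S k₁, w i with hε
    have hsum : ∀ k, ∑ j ∈ S k, (w j + if j = i then ε else 0) =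
        ∑ j ∈ S k, w j + if i ∈ S k then ε else 0 := by
      intro k
      rw [Finset.sum_add_distrib, Finset.sum_ite_eq']
    have hfeas : ∀ k, ∑ j ∈ S k, (w j + if j = i then ε else 0) ≤ b k := by
      intro k
      rw [hsum]
      split_ifs with h
      · calc _ ≤ ∑ j ∈ S k, w j + (b k - ∑ j ∈ S k, w j) := by gcongr; exact hmin k h
          _ = b k := add_tsub_cancel_of_le (hw k)
      · simpa using hw k
    refine ⟨fun j => w j + if j = i then ε else 0, hfeas, ?_⟩
    intro j hj
    rcases Finset.mem_insert.1 hj with rfl | hj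
    · refine ⟨k₁, hk₁, ?_⟩
      rw [hsum, if_pos hk₁, hε, add_tsub_cancel_of_le (hw k₁)]
    · obtain ⟨k, hk, hkeq⟩ := hsat j hj
      refine ⟨k, hk, le_antisymm (hfeas k) ?_⟩
      rw [← hkeq, hsum]
      exact le_self_add

/-- Discrete Frostman lemma at scale `2⁻ᴶ`. -/
lemma exists_discrete_frostman {X : Type*} [MetricSpace X] {t : ℝ} (ht : 0 < t) (P : Finset X)
    (J : ℕ) : ∃ w : X → ℝ≥0,
      (∀ y ∈ P, ∀ k ≤ J, ∑ x ∈ P with dist x y ≤ (1 / 2) ^ k, (w x : ℝ≥0∞)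
        ≤ ((1 / 2 : ℝ≥0∞) ^ k) ^ t) ∧
      content X t (⋃ x ∈ P, closedBall x ((1 / 2) ^ J)) ≤ 12 ^ t * ∑ x ∈ P, (w x : ℝ≥0∞) := by
  classical
  rcases P.eq_empty_or_nonempty with rfl | ⟨x₀, hx₀⟩
  · exact ⟨fun _ => 0, by simp, by simp⟩
  have : Nonempty (P × Fin (J + 1)) := ⟨(⟨x₀, hx₀⟩, 0)⟩
  obtain ⟨w, hw, hsat⟩ := exists_saturated_weights (ι := X)
    (fun q : P × Fin (J + 1) => P.filter fun x => dist x (q.1 : X) ≤ (1 / 2) ^ (q.2 : ℕ))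
    (fun q => ((1 / 2 : ℝ≥0) ^ (q.2 : ℕ)) ^ t) P
    (fun i hi => ⟨(⟨i, hi⟩, 0), by simp [hi]⟩)
  have hcast : ∀ k : ℕ, ((((1 / 2 : ℝ≥0) ^ k) ^ t : ℝ≥0) : ℝ≥0∞) = ((1 / 2 : ℝ≥0∞) ^ k) ^ t := by
    intro k
    rw [ENNReal.coe_rpow_of_nonneg _ ht.le]
    push_cast
    simp
  refine ⟨w, ?_, ?_⟩
  · intro y hy k hk
    have := hw (⟨y, hy⟩, ⟨k, by omega⟩)
    rw [← hcast]
    exact_mod_cast this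
  · choose! q hq1 hq2 using hsat
    obtain ⟨u, huP, hdis, hcov⟩ := Vitali.exists_disjoint_subfamily_covering_enlargement_closedBall
      (P : Set X) (fun x => ((q x).1 : X)) (fun x => (1 / 2) ^ ((q x).2 : ℕ)) 1
      (fun a _ => pow_le_one₀ (by norm_num) (by norm_num)) 5 (by norm_num)
    have hufin : u.Finite := P.finite_toSet.subset huP
    set U := hufin.toFinset with hU
    have hcover : (⋃ x ∈ P, closedBall x ((1 / 2) ^ J)) ⊆
        ⋃ x ∈ U, closedBall ((q x).1 : X) (6 * (1 / 2) ^ ((q x).2 : ℕ)) := by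
      intro z hz
      simp only [mem_iUnion, exists_prop] at hz ⊢
      obtain ⟨x, hx, hzx⟩ := hz
      obtain ⟨b, hb, hsub⟩ := hcov x hx
      refine ⟨b, by simpa [hU] using hb, ?_⟩
      have hx' : x ∈ closedBall ((q x).1 : X) ((1 / 2) ^ ((q x).2 : ℕ)) := by
        have := hq1 x hx
        simp only [Finset.mem_filter] at this
        exact this.2
      have h1 := mem_closedBall.1 (hsub hx')
      have h2 := mem_closedBall.1 hzx
      have h3 : (1 / 2 : ℝ) ^ J ≤ (1 / 2) ^ ((q b).2 : ℕ) :=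
        pow_le_pow_of_le_one (by norm_num) (by norm_num) (by omega)
      rw [mem_closedBall]
      linarith [dist_triangle z x ((q b).1 : X)]
    calc content X t _ ≤ content X t
          (⋃ x ∈ U, closedBall ((q x).1 : X) (6 * (1 / 2) ^ ((q x).2 : ℕ))) := measure_mono hcover
      _ ≤ ∑ x ∈ U, content X t (closedBall ((q x).1 : X) (6 * (1 / 2) ^ ((q x).2 : ℕ))) :=
          measure_biUnion_finset_le _ _
      _ ≤ ∑ x ∈ U, 12 ^ t * ∑ z ∈ P with dist z ((q x).1 : X) ≤ (1 / 2) ^ ((q x).2 : ℕ),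
            (w z : ℝ≥0∞) := by
          refine Finset.sum_le_sum fun x hx => ?_
          have hxP : x ∈ P := huP (by simpa [hU] using hx)
          have h1 : (∑ z ∈ P with dist z ((q x).1 : X) ≤ (1 / 2) ^ ((q x).2 : ℕ), (w z : ℝ≥0∞)) =
              ((1 / 2 : ℝ≥0∞) ^ ((q x).2 : ℕ)) ^ t := by
            rw [← hcast, ← hq2 x hxP]
            push_cast
            rfl
          rw [h1, ← ENNReal.mul_rpow_of_nonneg _ _ ht.le]
          refine (content_closedBall_le ht _ _).trans (le_of_eq ?_)
          congr 1
          rw [ENNReal.ofReal_mul (by norm_num), ← mul_assoc, ENNReal.ofReal_pow (by norm_num),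
            ENNReal.ofReal_div_of_pos (by norm_num)]
          norm_num
      _ = 12 ^ t * ∑ x ∈ U, ∑ z ∈ P with dist z ((q x).1 : X) ≤ (1 / 2) ^ ((q x).2 : ℕ),
            (w z : ℝ≥0∞) := (Finset.mul_sum _ _ _).symm
      _ ≤ _ := by
          gcongr
          rw [← Finset.sum_biUnion]
          · exact Finset.sum_le_sum_of_subset (Finset.biUnion_subset.2 fun x _ =>
              Finset.filter_subset _ _)
          · intro a ha b hb hab
            have := hdis (by simpa [hU] using ha) (by simpa [hU] using hb) hab
            rw [Function.onFun, Finset.disjoint_left]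
            intro z hza hzb
            simp only [Finset.mem_filter] at hza hzb
            exact Set.disjoint_left.1 this (mem_closedBall.2 hza.2) (mem_closedBall.2 hzb.2)

lemma lintegral_mul_sq_le {α : Type*} [MeasurableSpace α] (μ : Measure α) {f g : α → ℝ≥0∞}
    (hf : AEMeasurable f μ) (hg : AEMeasurable g μ) :
    (∫⁻ x, f x * g x ∂μ) ^ 2 ≤ (∫⁻ x, f x ^ 2 ∂μ) * ∫⁻ x, g x ^ 2 ∂μ := by
  have h := ENNReal.lintegral_mul_le_Lp_mul_Lq μ Real.HolderConjugate.two_two hf hg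
  simp only [Pi.mul_apply, ENNReal.rpow_two] at h
  calc _ ≤ _ := pow_le_pow_left' h 2
    _ = _ := by
      rw [mul_pow, ← ENNReal.rpow_natCast, ← ENNReal.rpow_mul, ← ENNReal.rpow_natCast,
        ← ENNReal.rpow_mul]
      norm_num

/-- The constant in the discrete energy estimate. -/
noncomputable def energyConst (m : ℕ) (t : ℝ) : ℝ≥0∞ :=
  shearConst m * (2 ^ m * ∑' k : ℕ, (2 ^ m * (1 / 2 : ℝ≥0∞) ^ t) ^ k)

lemma energyConst_ne_top {m : ℕ} {t : ℝ} (ht : (m : ℝ) < t) : energyConst m t ≠ ∞ := by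
  have h : 2 ^ m * (1 / 2 : ℝ≥0∞) ^ t < 1 := by
    calc 2 ^ m * (1 / 2 : ℝ≥0∞) ^ t < 2 ^ m * (1 / 2 : ℝ≥0∞) ^ (m : ℝ) := by
          refine ENNReal.mul_lt_mul_right (by simp) (by simp) ?_
          exact ENNReal.rpow_lt_rpow_of_exponent_gt (by simp) (by simp) ht
      _ = 1 := by
          rw [ENNReal.rpow_natCast, ← mul_pow, ENNReal.mul_div_cancel (by simp) (by simp), one_pow]
  rw [energyConst, ENNReal.tsum_geometric]
  refine ENNReal.mul_ne_top (shearConst_ne_top m) (ENNReal.mul_ne_top (by simp) ?_)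
  exact ENNReal.inv_ne_top.2 (tsub_pos_of_lt h).ne'

lemma slopeMeasure_shear_le_sum {m : ℕ} (x y : (Fin m → ℝ) × ℝ) (hxy : dist x y ≤ 1) (J : ℕ) :
    slopeMeasure m {u | ‖shear u (x - y)‖ ≤ 2 * (1 / 2) ^ J} ≤
      shearConst m * (2 * (1 / 2) ^ J) ^ m *
        ∑ k ∈ Finset.range (J + 1), if dist x y ≤ (1 / 2) ^ k then (2 ^ (k + 1)) ^ m else 0 := by
  have key : ∀ k, k ≤ J → dist x y ≤ (1 / 2) ^ k → (1 / 2) ^ (k + 1) ≤ dist x y ∨ k = J →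
      slopeMeasure m {u | ‖shear u (x - y)‖ ≤ 2 * (1 / 2) ^ J} ≤
        shearConst m * (2 * (1 / 2) ^ J) ^ m * (2 ^ (k + 1)) ^ m := by
    intro k hk h1 h2
    rcases h2 with h2 | rfl
    · refine (slopeMeasure_shear_le _ (by positivity)).trans ?_
      rw [mul_assoc, ← mul_pow]
      gcongr
      rw [div_eq_mul_inv]
      gcongr
      · rw [ENNReal.ofReal_mul (by norm_num), ENNReal.ofReal_pow (by norm_num),
          ENNReal.ofReal_div_of_pos (by norm_num)]
        simp
      · rw [ENNReal.inv_le_iff_inv_le, ← ofReal_norm, ← dist_eq_norm]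
        refine le_trans (le_of_eq ?_) (ENNReal.ofReal_le_ofReal h2)
        rw [ENNReal.ofReal_pow (by norm_num), ENNReal.ofReal_div_of_pos (by norm_num)]
        simp [ENNReal.inv_pow]
    · calc _ ≤ slopeMeasure m univ := measure_mono (subset_univ _)
        _ ≤ slopeMeasure m univ * 2 ^ m := le_mul_of_one_le_right' (one_le_pow₀ (by norm_num))
        _ ≤ shearConst m := le_self_add
        _ ≤ _ := by
          rw [mul_assoc, ← mul_pow, pow_succ, mul_assoc, ← mul_assoc (_ ^ k), ← mul_pow,
            ENNReal.div_mul_cancel (by simp) (by simp), one_pow, one_mul]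
          exact le_mul_of_one_le_right' (one_le_pow₀ (by norm_num))
  obtain ⟨k, hk, h1, h2⟩ : ∃ k ≤ J, dist x y ≤ (1 / 2) ^ k ∧
      ((1 / 2) ^ (k + 1) ≤ dist x y ∨ k = J) := by
    rcases le_or_gt (dist x y) ((1 / 2) ^ J) with h | h
    · exact ⟨J, le_rfl, h, Or.inr rfl⟩
    · have h0 : 0 < dist x y := lt_trans (by positivity) h
      obtain ⟨k, hk1, hk2⟩ := exists_nat_pow_near_of_lt_one h0 hxy (by norm_num : (0 : ℝ) < 1 / 2)
        (by norm_num)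
      refine ⟨k, ?_, hk2, Or.inl hk1.le⟩
      by_contra! hlt
      have := pow_le_pow_of_le_one (by norm_num : (0 : ℝ) ≤ 1 / 2) (by norm_num) hlt.le
      linarith
  refine (key k hk h1 h2).trans ?_
  gcongr
  have := Finset.single_le_sum (f := fun k => if dist x y ≤ (1 / 2) ^ k then
    ((2 : ℝ≥0∞) ^ (k + 1)) ^ m else 0) (s := Finset.range (J + 1)) (fun _ _ => zero_le)
    (Finset.mem_range.2 (Nat.lt_succ_of_le hk))
  simpa only [if_pos h1] using this

lemma discrete_energy_le {m : ℕ} (t : ℝ) (P : Finset ((Fin m → ℝ) × ℝ))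
    (hP : ∀ x ∈ P, ∀ y ∈ P, dist x y ≤ 1) (J : ℕ) (w : (Fin m → ℝ) × ℝ → ℝ≥0)
    (hw : ∀ y ∈ P, ∀ k ≤ J, ∑ x ∈ P with dist x y ≤ (1 / 2) ^ k, (w x : ℝ≥0∞)
        ≤ ((1 / 2 : ℝ≥0∞) ^ k) ^ t) :
    ∑ x ∈ P, ∑ y ∈ P, (w x : ℝ≥0∞) * w y *
        slopeMeasure m {u | ‖shear u (x - y)‖ ≤ 2 * (1 / 2) ^ J} ≤
      energyConst m t * (2 * (1 / 2) ^ J) ^ m * ∑ x ∈ P, (w x : ℝ≥0∞) := by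
  have hin : ∀ y ∈ P, ∑ x ∈ P, (w x : ℝ≥0∞) *
      (∑ k ∈ Finset.range (J + 1), if dist x y ≤ (1 / 2) ^ k then (2 ^ (k + 1)) ^ m else 0) ≤
      2 ^ m * ∑' k : ℕ, (2 ^ m * (1 / 2 : ℝ≥0∞) ^ t) ^ k := by
    intro y hy
    calc _ = ∑ k ∈ Finset.range (J + 1), (2 ^ (k + 1)) ^ m *
          ∑ x ∈ P with dist x y ≤ (1 / 2) ^ k, (w x : ℝ≥0∞) := by
          simp_rw [Finset.mul_sum]
          rw [Finset.sum_comm]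
          refine Finset.sum_congr rfl fun k _ => ?_
          rw [Finset.sum_filter]
          refine Finset.sum_congr rfl fun x _ => ?_
          split_ifs <;> simp [mul_comm]
      _ ≤ ∑ k ∈ Finset.range (J + 1), (2 ^ (k + 1)) ^ m * ((1 / 2 : ℝ≥0∞) ^ k) ^ t := by
          refine Finset.sum_le_sum fun k hk => ?_
          gcongr
          exact hw y hy k (Nat.le_of_lt_succ (Finset.mem_range.1 hk))
      _ = 2 ^ m * ∑ k ∈ Finset.range (J + 1), (2 ^ m * (1 / 2 : ℝ≥0∞) ^ t) ^ k := by
          rw [Finset.mul_sum]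
          refine Finset.sum_congr rfl fun k _ => ?_
          rw [mul_pow, ← mul_assoc, ← ENNReal.rpow_natCast_mul, mul_comm (k : ℝ) t,
            ENNReal.rpow_mul_natCast]
          congr 1
          ring
      _ ≤ _ := by
          gcongr
          exact ENNReal.sum_le_tsum _
  calc _ ≤ ∑ x ∈ P, ∑ y ∈ P, (w x : ℝ≥0∞) * w y * (shearConst m * (2 * (1 / 2) ^ J) ^ m *
        ∑ k ∈ Finset.range (J + 1), if dist x y ≤ (1 / 2) ^ k then (2 ^ (k + 1)) ^ m else 0) := by
        refine Finset.sum_le_sum fun x hx => Finset.sum_le_sum fun y hy => ?_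
        gcongr
        exact slopeMeasure_shear_le_sum x y (hP x hx y hy) J
    _ = shearConst m * (2 * (1 / 2) ^ J) ^ m * ∑ y ∈ P, w y * ∑ x ∈ P, (w x : ℝ≥0∞) *
      (∑ k ∈ Finset.range (J + 1), if dist x y ≤ (1 / 2) ^ k then (2 ^ (k + 1)) ^ m else 0) := by
        rw [Finset.sum_comm]
        simp only [Finset.mul_sum]
        refine Finset.sum_congr rfl fun y _ => Finset.sum_congr rfl fun x _ =>
          Finset.sum_congr rfl fun k _ => ?_
        ring
    _ ≤ shearConst m * (2 * (1 / 2) ^ J) ^ m * ∑ y ∈ P, w y *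
        (2 ^ m * ∑' k : ℕ, (2 ^ m * (1 / 2 : ℝ≥0∞) ^ t) ^ k) := by
        gcongr with y hy
        exact hin y hy
    _ = _ := by
        rw [← Finset.sum_mul, energyConst]; ring

/-- Semicontinuity in the second variable, uniform in both variables. -/
def EquiUsc {V W : Type*} [PseudoMetricSpace W] (h : V × W → ℝ≥0∞) : Prop :=
  ∀ ε : ℝ≥0∞, ε ≠ 0 → ∃ δ > 0, ∀ u v v', dist v v' ≤ δ → h (u, v) ≤ h (u, v') + ε

/-- The unnormalised indicator of the tube of radius `ρ` around the line through `x`. -/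
noncomputable def tube {m : ℕ} (ρ : ℝ) (x : (Fin m → ℝ) × ℝ) : (Fin m → ℝ) × (Fin m → ℝ) → ℝ≥0∞ :=
  indicator {z | dist z.2 (shear z.1 x) ≤ ρ} 1

@[fun_prop]
lemma measurable_tube {m : ℕ} (ρ : ℝ) (x : (Fin m → ℝ) × ℝ) : Measurable (tube ρ x) := by
  refine measurable_one.indicator (IsClosed.measurableSet ?_)
  exact isClosed_le (by fun_prop) continuous_const

lemma lintegral_mul_tube {m : ℕ} (ρ : ℝ) (x : (Fin m → ℝ) × ℝ) (u : Fin m → ℝ)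
    (f : (Fin m → ℝ) → ℝ≥0∞) :
    ∫⁻ v, f v * tube ρ x (u, v) = ∫⁻ v in closedBall (shear u x) ρ, f v := by
  rw [← lintegral_indicator measurableSet_closedBall]
  refine lintegral_congr fun v => ?_
  by_cases h : dist v (shear u x) ≤ ρ <;> simp [tube, indicator, h, mem_closedBall]

lemma volume_closedBall_pow {m : ℕ} (v : Fin m → ℝ) (J : ℕ) :
    volume (closedBall v ((1 / 2) ^ J)) = (2 * (1 / 2 : ℝ≥0∞) ^ J) ^ m := by
  rw [Real.volume_pi_closedBall _ (by positivity), Fintype.card_fin,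
    ENNReal.ofReal_pow (by positivity), ENNReal.ofReal_mul (by norm_num),
    ENNReal.ofReal_pow (by norm_num), ENNReal.ofReal_div_of_pos (by norm_num)]
  simp

lemma lintegral_tube_mul_tube_le {m : ℕ} (J : ℕ) (x y : (Fin m → ℝ) × ℝ) :
    ∫⁻ z, tube ((1 / 2) ^ J) x z * tube ((1 / 2) ^ J) y z ∂(slopeMeasure m).prod volume ≤
      (2 * (1 / 2 : ℝ≥0∞) ^ J) ^ m *
        slopeMeasure m {u | ‖shear u (x - y)‖ ≤ 2 * (1 / 2) ^ J} := by
  rw [lintegral_prod _ (by fun_prop)]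
  have hm : MeasurableSet {u : Fin m → ℝ | ‖shear u (x - y)‖ ≤ 2 * (1 / 2) ^ J} :=
    (isClosed_le (by fun_prop) continuous_const).measurableSet
  rw [← setLIntegral_const, ← lintegral_indicator hm]
  refine lintegral_mono fun u => ?_
  rw [lintegral_mul_tube, indicator_apply]
  split_ifs with h
  · rw [← volume_closedBall_pow (shear u y) J, ← setLIntegral_one]
    refine lintegral_mono fun v => ?_
    exact indicator_le_self' (by simp) _ |>.trans (by simp)
  · refine le_of_eq ?_
    rw [setLIntegral_congr_fun measurableSet_closedBall (g := fun _ => 0), lintegral_zero]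
    intro v hv
    simp only [tube, indicator_apply_eq_zero, mem_ofPred_eq]
    intro hv'
    refine absurd ?_ h
    simp only [mem_ofPred_eq, shear_sub, ← dist_eq_norm]
    rw [mem_closedBall] at hv
    linarith [dist_triangle_left (shear u x) (shear u y) v]

lemma content_superlevel_le {m : ℕ} {t : ℝ} (ht : (m : ℝ) < t)
    {h : (Fin m → ℝ) × (Fin m → ℝ) → ℝ≥0∞} (hm : Measurable h) (hu : EquiUsc h)
    {a : ℝ≥0∞} (ha : a ≠ 0) (ha' : a ≠ ∞) (x₀ : (Fin m → ℝ) × ℝ) :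
    content _ t {x ∈ ball x₀ (1 / 2) | a < ∫⁻ u, h (u, shear u x) ∂slopeMeasure m} ≤
      12 ^ t * (4 * energyConst m t) *
        ((∫⁻ z, h z ^ 2 ∂(slopeMeasure m).prod volume) / a ^ 2) := by
  classical
  have ht0 : 0 < t := m.cast_nonneg.trans_lt ht
  set κ := slopeMeasure m
  set E := {x ∈ ball x₀ (1 / 2) | a < ∫⁻ u, h (u, shear u x) ∂slopeMeasure m} with hE
  obtain ⟨ε, hε0, hε⟩ : ∃ ε : ℝ≥0∞, ε ≠ 0 ∧ ε * κ univ ≤ a / 2 := by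
    refine ⟨a / 2 / (κ univ + 1), ?_, ?_⟩
    · exact ENNReal.div_ne_zero.2 ⟨ENNReal.div_ne_zero.2 ⟨ha, by simp⟩, by finiteness⟩
    · calc _ ≤ a / 2 / (κ univ + 1) * (κ univ + 1) := by gcongr; exact le_self_add
        _ = a / 2 := ENNReal.div_mul_cancel (by simp) (by finiteness)
  obtain ⟨δ, hδ, hδh⟩ := hu ε hε0
  obtain ⟨J, hJ⟩ := exists_pow_lt_of_lt_one hδ (by norm_num : (1 / 2 : ℝ) < 1)
  have hρ : (0 : ℝ) < (1 / 2) ^ J := by positivity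
  have hEb : TotallyBounded E :=
    (isCompact_closedBall x₀ (1 / 2)).totallyBounded.subset
      ((sep_subset _ _).trans ball_subset_closedBall)
  obtain ⟨P', hP'E, hP'fin, hP'cov⟩ := finite_approx_of_totallyBounded hEb _ hρ
  lift P' to Finset ((Fin m → ℝ) × ℝ) using hP'fin with P
  obtain ⟨w, hw, hcont⟩ := exists_discrete_frostman ht0 P J
  set c : ℝ≥0∞ := (2 * (1 / 2 : ℝ≥0∞) ^ J) ^ m with hc
  have hc0 : c ≠ 0 := by simp [hc]
  have hct : c ≠ ∞ := ENNReal.pow_ne_top (ENNReal.mul_ne_top (by simp)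
    (ENNReal.pow_ne_top (by simp)))
  set W : ℝ≥0∞ := ∑ x ∈ P, (w x : ℝ≥0∞) with hW
  have hWt : W ≠ ∞ := by simp [hW]
  have hP1 : ∀ x ∈ P, ∀ y ∈ P, dist x y ≤ 1 := by
    intro x hx y hy
    have h1 := (hP'E hx).1
    have h2 := (hP'E hy).1
    rw [mem_ball] at h1 h2
    linarith [dist_triangle_right x y x₀]
  have henergy := discrete_energy_le t P hP1 J w hw
  set G : (Fin m → ℝ) × (Fin m → ℝ) → ℝ≥0∞ :=
    fun z => ∑ x ∈ P, (w x : ℝ≥0∞) * tube ((1 / 2) ^ J) x z with hG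
  have hGm : Measurable G := by fun_prop
  have hG2 : ∫⁻ z, G z ^ 2 ∂κ.prod volume ≤ c ^ 2 * energyConst m t * W := by
    calc ∫⁻ z, G z ^ 2 ∂κ.prod volume
        = ∑ x ∈ P, ∑ y ∈ P, (w x : ℝ≥0∞) * w y *
          ∫⁻ z, tube ((1 / 2) ^ J) x z * tube ((1 / 2) ^ J) y z ∂κ.prod volume := by
          simp_rw [hG, sq, Finset.sum_mul_sum]
          rw [lintegral_finsetSum _ (by fun_prop)]
          refine Finset.sum_congr rfl fun x _ => ?_
          rw [lintegral_finsetSum _ (by fun_prop)]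
          refine Finset.sum_congr rfl fun y _ => ?_
          rw [← lintegral_const_mul _ (by fun_prop)]
          refine lintegral_congr fun z => ?_
          ring
      _ ≤ ∑ x ∈ P, ∑ y ∈ P, (w x : ℝ≥0∞) * w y *
          (c * κ {u | ‖shear u (x - y)‖ ≤ 2 * (1 / 2) ^ J}) := by
          gcongr with x _ y _
          exact lintegral_tube_mul_tube_le J x y
      _ = c * ∑ x ∈ P, ∑ y ∈ P, (w x : ℝ≥0∞) * w y *
          κ {u | ‖shear u (x - y)‖ ≤ 2 * (1 / 2) ^ J} := by
          simp only [Finset.mul_sum]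
          refine Finset.sum_congr rfl fun x _ => Finset.sum_congr rfl fun y _ => ?_
          ring
      _ ≤ c * (energyConst m t * c * W) := by gcongr
      _ = _ := by ring
  have hpair : ∀ x ∈ P, c * (a / 2) ≤ ∫⁻ z, h z * tube ((1 / 2) ^ J) x z ∂κ.prod volume := by
    intro x hx
    have hax : a ≤ ∫⁻ u, h (u, shear u x) ∂κ := (hP'E hx).2.le
    rw [lintegral_prod _ (by fun_prop)]
    have h1 : ∀ u, c * h (u, shear u x) ≤
        (∫⁻ v, h (u, v) * tube ((1 / 2) ^ J) x (u, v)) + c * ε := by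
      intro u
      rw [lintegral_mul_tube _ _ _ fun v => h (u, v), hc, ← volume_closedBall_pow (shear u x) J]
      calc _ = ∫⁻ v in closedBall (shear u x) ((1 / 2) ^ J), h (u, shear u x) := by
            rw [setLIntegral_const, mul_comm]
        _ ≤ ∫⁻ v in closedBall (shear u x) ((1 / 2) ^ J), (h (u, v) + ε) := by
            refine setLIntegral_mono' measurableSet_closedBall fun v hv => ?_
            refine hδh u _ _ ?_
            rw [dist_comm]
            exact (mem_closedBall.1 hv).trans hJ.le
        _ = _ := by
            rw [lintegral_add_right _ measurable_const, setLIntegral_const, mul_comm ε]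
    have h2 : c * a ≤ (∫⁻ u, ∫⁻ v, h (u, v) * tube ((1 / 2) ^ J) x (u, v) ∂volume ∂κ) +
        c * (a / 2) := by
      calc c * a ≤ c * ∫⁻ u, h (u, shear u x) ∂κ := by gcongr
        _ = ∫⁻ u, c * h (u, shear u x) ∂κ := by
          rw [lintegral_const_mul]
          exact hm.comp (by fun_prop)
        _ ≤ ∫⁻ u, ((∫⁻ v, h (u, v) * tube ((1 / 2) ^ J) x (u, v)) + c * ε) ∂κ :=
          lintegral_mono h1
        _ = _ := by
          rw [lintegral_add_right _ measurable_const, lintegral_const]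
        _ ≤ _ := by
          gcongr _ + ?_
          rw [mul_assoc]
          gcongr
    have h3 : c * a = c * (a / 2) + c * (a / 2) := by
      rw [← mul_add, ENNReal.add_halves]
    rw [h3] at h2
    exact (ENNReal.add_le_add_iff_right (by finiteness)).1 h2
  have hlow : c * (a / 2) * W ≤ ∫⁻ z, h z * G z ∂κ.prod volume := by
    calc c * (a / 2) * W = ∑ x ∈ P, (w x : ℝ≥0∞) * (c * (a / 2)) := by
          rw [hW, ← Finset.sum_mul, mul_comm]
      _ ≤ ∑ x ∈ P, (w x : ℝ≥0∞) * ∫⁻ z, h z * tube ((1 / 2) ^ J) x z ∂κ.prod volume := by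
          gcongr with x hx
          exact hpair x hx
      _ = _ := by
          simp_rw [hG, Finset.mul_sum]
          rw [lintegral_finsetSum _ (by fun_prop)]
          refine Finset.sum_congr rfl fun x _ => ?_
          rw [← lintegral_const_mul _ (by fun_prop)]
          refine lintegral_congr fun z => ?_
          ring
  have hmain : W ≤ 4 * energyConst m t * ((∫⁻ z, h z ^ 2 ∂κ.prod volume) / a ^ 2) := by
    rcases eq_or_ne W 0 with hW0 | hW0
    · simp [hW0]
    have h1 := (pow_le_pow_left' hlow 2).trans
      (lintegral_mul_sq_le _ hm.aemeasurable hGm.aemeasurable)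
    have h2 : c ^ 2 * W * (W * (a / 2) ^ 2) ≤
        c ^ 2 * W * (energyConst m t * ∫⁻ z, h z ^ 2 ∂κ.prod volume) := by
      calc _ = (c * (a / 2) * W) ^ 2 := by ring
        _ ≤ _ := h1
        _ ≤ (∫⁻ z, h z ^ 2 ∂κ.prod volume) * (c ^ 2 * energyConst m t * W) := by gcongr
        _ = _ := by ring
    have h3 := (ENNReal.mul_le_mul_iff_right (by simp [hc0, hW0]) (by finiteness)).1 h2
    calc W = 4 * (W * (a / 2) ^ 2) / a ^ 2 := by
          have hsq : (a / 2) ^ 2 = (2 ^ 2)⁻¹ * a ^ 2 := by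
            rw [ENNReal.div_eq_inv_mul, mul_pow, ENNReal.inv_pow]
          have h4 : (4 : ℝ≥0∞) * (2 ^ 2)⁻¹ = 1 := by
            norm_num
            exact ENNReal.mul_inv_cancel (by simp) (by simp)
          have h5 : a ^ 2 * (a ^ 2)⁻¹ = 1 :=
            ENNReal.mul_inv_cancel (by simpa using ha) (by finiteness)
          calc W = (4 * (2 ^ 2)⁻¹) * W * (a ^ 2 * (a ^ 2)⁻¹) := by rw [h4, h5, one_mul, mul_one]
            _ = _ := by rw [hsq, div_eq_mul_inv]; ring
      _ ≤ 4 * (energyConst m t * ∫⁻ z, h z ^ 2 ∂κ.prod volume) / a ^ 2 := by gcongr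
      _ = _ := by rw [← mul_assoc, mul_div_assoc]
  calc content _ t E ≤ content _ t (⋃ x ∈ P, closedBall x ((1 / 2) ^ J)) :=
        measure_mono (hP'cov.trans (iUnion₂_mono fun x _ => ball_subset_closedBall))
    _ ≤ 12 ^ t * W := hcont
    _ ≤ _ := by rw [mul_assoc]; gcongr

lemma hausdorffMeasure_not_eventually_le_eq_zero {m : ℕ} {t : ℝ} (ht : (m : ℝ) < t) {ι : Type*}
    [Countable ι] {h : ι → (Fin m → ℝ) × (Fin m → ℝ) → ℝ≥0∞} (hm : ∀ i, Measurable (h i))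
    (hu : ∀ i, EquiUsc (h i)) {a : ι → ℝ≥0∞} (ha : ∀ i, a i ≠ 0) (ha' : ∀ i, a i ≠ ∞)
    (hsum : ∑' i, (∫⁻ z, h i z ^ 2 ∂(slopeMeasure m).prod volume) / a i ^ 2 ≠ ∞) :
    μH[t] {x : (Fin m → ℝ) × ℝ |
      ¬ ∀ᶠ i in cofinite, ∫⁻ u, h i (u, shear u x) ∂slopeMeasure m ≤ a i} = 0 := by
  have ht0 : 0 < t := m.cast_nonneg.trans_lt ht
  set B := {x : (Fin m → ℝ) × ℝ |
      ¬ ∀ᶠ i in cofinite, ∫⁻ u, h i (u, shear u x) ∂slopeMeasure m ≤ a i} with hB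
  have hball : ∀ x₀ : (Fin m → ℝ) × ℝ, μH[t] (B ∩ ball x₀ (1 / 2)) = 0 := by
    intro x₀
    refine hausdorffMeasure_eq_zero_of_content_eq_zero ht0 ?_
    set S : ι → Set ((Fin m → ℝ) × ℝ) := fun i =>
      {x ∈ ball x₀ (1 / 2) | a i < ∫⁻ u, h i (u, shear u x) ∂slopeMeasure m}
    have hS : content _ t (limsup S cofinite) = 0 := by
      refine measure_limsup_cofinite_eq_zero (ne_top_of_le_ne_top ?_ (ENNReal.tsum_le_tsum fun i =>
        content_superlevel_le ht (hm i) (hu i) (ha i) (ha' i) x₀))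
      rw [ENNReal.tsum_mul_left]
      refine ENNReal.mul_ne_top (ENNReal.mul_ne_top ?_ ?_) hsum
      · exact ENNReal.rpow_ne_top_of_nonneg ht0.le (by simp)
      · exact ENNReal.mul_ne_top (by simp) (energyConst_ne_top ht)
    refine measure_mono_null ?_ hS
    rintro x ⟨hx, hx'⟩
    rw [mem_limsup_iff_frequently_mem]
    have hx : ∃ᶠ i in cofinite, ¬ ∫⁻ u, h i (u, shear u x) ∂slopeMeasure m ≤ a i :=
      not_eventually.1 hx
    exact hx.mono fun i hi => ⟨hx', not_le.1 hi⟩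
  have hcov : B ⊆ ⋃ i, B ∩ ball (TopologicalSpace.denseSeq ((Fin m → ℝ) × ℝ) i) (1 / 2) := by
    intro x hx
    obtain ⟨i, hi⟩ := (TopologicalSpace.denseRange_denseSeq ((Fin m → ℝ) × ℝ)).exists_dist_lt x
      (by norm_num : (0 : ℝ) < 1 / 2)
    exact mem_iUnion.2 ⟨i, hx, hi⟩
  exact measure_mono_null hcov (measure_iUnion_null fun i => hball _)

lemma EquiUsc.tsub {V W : Type*} [PseudoMetricSpace W] {f g : V × W → ℝ≥0∞} (hf : EquiUsc f)
    (hg : EquiUsc g) : EquiUsc fun z => f z - g z := by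
  intro ε hε
  obtain ⟨δ₁, hδ₁, h₁⟩ := hf (ε / 2) (ENNReal.div_ne_zero.2 ⟨hε, by simp⟩)
  obtain ⟨δ₂, hδ₂, h₂⟩ := hg (ε / 2) (ENNReal.div_ne_zero.2 ⟨hε, by simp⟩)
  refine ⟨min δ₁ δ₂, lt_min hδ₁ hδ₂, fun u v v' hv => ?_⟩
  have h₁ := h₁ u v v' (hv.trans (min_le_left _ _))
  have h₂ := h₂ u v' v (by rw [dist_comm]; exact hv.trans (min_le_right _ _))
  rw [tsub_le_iff_right]
  calc f (u, v) ≤ f (u, v') + ε / 2 := h₁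
    _ ≤ (f (u, v') - g (u, v') + g (u, v')) + ε / 2 := by gcongr; exact le_tsub_add
    _ ≤ (f (u, v') - g (u, v') + (g (u, v) + ε / 2)) + ε / 2 := by gcongr
    _ = f (u, v') - g (u, v') + (ε / 2 + ε / 2) + g (u, v) := by ring
    _ = _ := by rw [ENNReal.add_halves]

lemma EquiUsc.add {V W : Type*} [PseudoMetricSpace W] {f g : V × W → ℝ≥0∞} (hf : EquiUsc f)
    (hg : EquiUsc g) : EquiUsc fun z => f z + g z := by
  intro ε hε
  obtain ⟨δ₁, hδ₁, h₁⟩ := hf (ε / 2) (ENNReal.div_ne_zero.2 ⟨hε, by simp⟩)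
  obtain ⟨δ₂, hδ₂, h₂⟩ := hg (ε / 2) (ENNReal.div_ne_zero.2 ⟨hε, by simp⟩)
  refine ⟨min δ₁ δ₂, lt_min hδ₁ hδ₂, fun u v v' hv => ?_⟩
  have h₁ := h₁ u v v' (hv.trans (min_le_left _ _))
  have h₂ := h₂ u v v' (hv.trans (min_le_right _ _))
  calc f (u, v) + g (u, v) ≤ (f (u, v') + ε / 2) + (g (u, v') + ε / 2) := add_le_add h₁ h₂
    _ = f (u, v') + g (u, v') + (ε / 2 + ε / 2) := by ring
    _ = _ := by rw [ENNReal.add_halves]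

/-- Lipschitz approximations from below of the indicator of an open set. -/
noncomputable def bump {Z : Type*} [PseudoEMetricSpace Z] (O : Set Z) (j : ℕ) (z : Z) : ℝ≥0∞ :=
  min 1 (j * infEDist z Oᶜ)

lemma measurable_bump {Z : Type*} [PseudoEMetricSpace Z] [MeasurableSpace Z]
    [OpensMeasurableSpace Z] (O : Set Z) (j : ℕ) : Measurable (bump O j) :=
  measurable_const.min (measurable_const.mul measurable_infEDist)

lemma equiUsc_bump {V W : Type*} [PseudoMetricSpace V] [PseudoMetricSpace W] (O : Set (V × W))
    (j : ℕ) : EquiUsc (bump O j) := by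
  intro ε hε
  obtain ⟨δ, hδ, hle⟩ : ∃ δ : ℝ, 0 < δ ∧ (j : ℝ≥0∞) * ENNReal.ofReal δ ≤ ε := by
    obtain ⟨ε', hε', hle⟩ := ENNReal.lt_iff_exists_nnreal_btwn.1 (pos_iff_ne_zero.2 hε)
    have h0 : 0 < ε' := by simpa using hε'
    refine ⟨ε' / (j + 1), by positivity, le_trans ?_ hle.le⟩
    rw [← ENNReal.ofReal_natCast, ← ENNReal.ofReal_mul (by positivity),
      ← ENNReal.ofReal_coe_nnreal]
    refine ENNReal.ofReal_le_ofReal ?_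
    rw [mul_div_assoc', div_le_iff₀ (by positivity)]
    nlinarith [ε'.coe_nonneg]
  refine ⟨δ, hδ, fun u v v' hv => ?_⟩
  have h1 : infEDist (u, v) Oᶜ ≤ infEDist (u, v') Oᶜ + ENNReal.ofReal δ := by
    refine (infEDist_le_infEDist_add_edist (y := (u, v'))).trans ?_
    gcongr
    rw [Prod.edist_eq]
    simpa [edist_dist] using ENNReal.ofReal_le_ofReal hv
  calc bump O j (u, v) ≤ min 1 (j * infEDist (u, v') Oᶜ + j * ENNReal.ofReal δ) := by
        rw [← mul_add]; unfold bump; gcongr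
    _ ≤ min 1 (j * infEDist (u, v') Oᶜ) + j * ENNReal.ofReal δ := by
        rw [← min_add_add_right]
        exact min_le_min le_self_add le_rfl
    _ ≤ _ := by unfold bump; gcongr

lemma bump_mono {Z : Type*} [PseudoEMetricSpace Z] (O : Set Z) (z : Z) :
    Monotone fun j => bump O j z := by
  intro j k hjk
  simp only [bump]
  gcongr

lemma bump_le_indicator {Z : Type*} [PseudoEMetricSpace Z] (O : Set Z) (j : ℕ) (z : Z) :
    bump O j z ≤ O.indicator 1 z := by
  by_cases hz : z ∈ O
  · simp [hz, bump]
  · simp [hz, bump, infEDist_zero_of_mem]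

lemma eventually_bump_eq_indicator {Z : Type*} [PseudoEMetricSpace Z] {O : Set Z} (hO : IsOpen O)
    (z : Z) : ∀ᶠ j in atTop, bump O j z = O.indicator 1 z := by
  by_cases hz : z ∈ O
  · have h0 : infEDist z Oᶜ ≠ 0 := by
      rw [Ne, ← mem_iff_infEDist_zero_of_closed hO.isClosed_compl]
      simpa using hz
    obtain ⟨k, hk⟩ := ENNReal.exists_nat_mul_gt h0 ENNReal.one_ne_top
    filter_upwards [eventually_ge_atTop k] with j hj
    simp only [bump, hz, indicator_of_mem, Pi.one_apply, min_eq_left_iff]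
    exact hk.le.trans (by gcongr)
  · exact Eventually.of_forall fun j => by simp [hz, bump, infEDist_zero_of_mem]

lemma exists_tsum_eq_indicator {m : ℕ} {O : Set ((Fin m → ℝ) × (Fin m → ℝ))} (hO : IsOpen O)
    {μ : Measure ((Fin m → ℝ) × (Fin m → ℝ))} {ε : ℝ≥0∞} (hε : ε ≠ 0) (hε' : ε ≠ ∞)
    (hμ : μ O ≤ ε) : ∃ d : ℕ → (Fin m → ℝ) × (Fin m → ℝ) → ℝ≥0∞,
      (∀ l, Measurable (d l)) ∧ (∀ l, EquiUsc (d l)) ∧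
      (∀ l, ∫⁻ z, d l z ^ 2 ∂μ ≤ (1 / 16) ^ l * ε) ∧ ∀ z ∈ O, 1 ≤ ∑' l, d l z := by
  have hlim : Tendsto (fun j => ∫⁻ z, (O.indicator 1 z - bump O j z) ^ 2 ∂μ) atTop (𝓝 0) := by
    have := tendsto_lintegral_of_dominated_convergence (μ := μ)
      (F := fun j z => (O.indicator 1 z - bump O j z) ^ 2) (f := fun _ => 0) (O.indicator 1)
      (fun j => ((measurable_one.indicator hO.measurableSet).sub (measurable_bump O j)).pow_const 2)
      (fun j => Eventually.of_forall fun z => ?_) ?_ (Eventually.of_forall fun z => ?_)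
    · simpa using this
    · by_cases hz : z ∈ O
      · simp only [hz, indicator_of_mem, Pi.one_apply]
        exact pow_le_one₀ zero_le tsub_le_self
      · simp [hz]
    · rw [lintegral_indicator_one hO.measurableSet]
      exact ne_top_of_le_ne_top hε' hμ
    · refine tendsto_const_nhds.congr' ?_
      filter_upwards [eventually_bump_eq_indicator hO z] with j hj
      simp [hj]
  obtain ⟨φ, hφ, hφP⟩ := extraction_forall_of_eventually'
    (P := fun l j => ∫⁻ z, (O.indicator 1 z - bump O j z) ^ 2 ∂μ ≤ (1 / 16) ^ l * ε) (by
      intro l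
      have h0 : 0 < (1 / 16 : ℝ≥0∞) ^ l * ε := by
        refine pos_iff_ne_zero.2 (mul_ne_zero (pow_ne_zero _ ?_) hε)
        simp
      exact eventually_atTop.1 (hlim.eventually_le_const h0))
  set q : ℕ → ℕ := fun l => if l = 0 then 0 else φ l with hq
  have hqmono : Monotone q := by
    refine monotone_nat_of_le_succ fun l => ?_
    by_cases hl : l = 0
    · simp [hq, hl]
    · simpa [hq, hl] using hφ.monotone (Nat.le_succ l)
  have hqtop : Tendsto q atTop atTop := by
    refine hφ.tendsto_atTop.congr' ?_
    filter_upwards [eventually_ne_atTop 0] with l hl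
    simp [hq, hl]
  have hqP : ∀ l, ∫⁻ z, (O.indicator 1 z - bump O (q l) z) ^ 2 ∂μ ≤ (1 / 16) ^ l * ε := by
    intro l
    by_cases hl : l = 0
    · subst hl
      calc _ ≤ ∫⁻ z, O.indicator 1 z ∂μ := by
            refine lintegral_mono fun z => ?_
            by_cases hz : z ∈ O
            · simp only [hz, indicator_of_mem, Pi.one_apply]
              exact pow_le_one₀ zero_le tsub_le_self
            · simp [hz]
        _ ≤ _ := by rw [lintegral_indicator_one hO.measurableSet]; simpa using hμ
    · simpa [hq, hl] using hφP l
  refine ⟨fun l z => bump O (q (l + 1)) z - bump O (q l) z,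
    fun l => (measurable_bump _ _).sub (measurable_bump _ _),
    fun l => (equiUsc_bump _ _).tsub (equiUsc_bump _ _), fun l => ?_, fun z hz => ?_⟩
  · refine (lintegral_mono fun z => ?_).trans (hqP l)
    exact pow_le_pow_left' (tsub_le_tsub_right (bump_le_indicator _ _ _) _) 2
  · have hs : ∀ k, ∑ l ∈ Finset.range k, (bump O (q (l + 1)) z - bump O (q l) z) =
        bump O (q k) z := by
      intro k
      induction k with
      | zero => simp [hq, bump]
      | succ k ih =>
        rw [Finset.sum_range_succ, ih]
        exact add_tsub_cancel_of_le (bump_mono O z (hqmono k.le_succ))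
    obtain ⟨k, hk⟩ := (hqtop.eventually (eventually_bump_eq_indicator hO z)).exists
    calc (1 : ℝ≥0∞) = bump O (q k) z := by rw [hk]; simp [hz]
      _ ≤ _ := by rw [← hs]; exact ENNReal.sum_le_tsum _

/-- Null sets of the product are invisible from outside a small exceptional set. -/
lemma hausdorffMeasure_not_ae_notMem_eq_zero {m : ℕ} {t : ℝ} (ht : (m : ℝ) < t)
    {N : Set ((Fin m → ℝ) × (Fin m → ℝ))} (hN : (slopeMeasure m).prod volume N = 0) :
    μH[t] {x : (Fin m → ℝ) × ℝ | ¬ ∀ᵐ u ∂slopeMeasure m, (u, shear u x) ∉ N} = 0 := by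
  have hpos : ∀ k : ℕ, (1 / 16 : ℝ≥0∞) ^ k ≠ 0 := fun k => pow_ne_zero _ (by simp)
  choose O hNO hO hOμ using fun k : ℕ => N.exists_isOpen_lt_of_lt (μ := (slopeMeasure m).prod volume)
    ((1 / 16) ^ k) (by rw [hN]; exact pos_iff_ne_zero.2 (hpos k))
  choose d hdm hdu hdi hds using fun k => exists_tsum_eq_indicator (hO k) (hpos k)
    (ENNReal.pow_ne_top (by simp)) (hOμ k).le
  refine measure_mono_null ?_ (hausdorffMeasure_not_eventually_le_eq_zero ht (ι := ℕ × ℕ)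
    (h := fun p => d p.1 p.2) (fun p => hdm _ _) (fun p => hdu _ _)
    (a := fun p => (1 / 2) ^ p.1 * (1 / 2) ^ p.2) (fun p => by simp)
    (fun p => by
      exact ENNReal.mul_ne_top (ENNReal.pow_ne_top (by simp)) (ENNReal.pow_ne_top (by simp))) ?_)
  · intro x hx hx'
    refine hx ?_
    have hx' : ∀ᶠ p : ℕ × ℕ in cofinite, ∫⁻ u, d p.1 p.2 (u, shear u x) ∂slopeMeasure m ≤
      (1 / 2) ^ p.1 * (1 / 2) ^ p.2 := hx'
    have hev : ∀ᶠ k : ℕ in atTop, ∀ l, ∫⁻ u, d k l (u, shear u x) ∂slopeMeasure m ≤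
        (1 / 2) ^ k * (1 / 2) ^ l := by
      rw [eventually_cofinite] at hx'
      have := (hx'.image Prod.fst).eventually_cofinite_notMem
      rw [Nat.cofinite_eq_atTop] at this
      filter_upwards [this] with k hk l
      by_contra hc
      exact hk ⟨(k, l), hc, rfl⟩
    have hle : ∀ᶠ k : ℕ in atTop, slopeMeasure m {u | (u, shear u x) ∈ N} ≤ (1 / 2) ^ k * 2 := by
      filter_upwards [hev] with k hk
      have hm : MeasurableSet {u | (u, shear u x) ∈ O k} :=
        ((hO k).preimage (by fun_prop : Continuous fun u => (u, shear u x))).measurableSet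
      have hmd : ∀ l, Measurable fun u => d k l (u, shear u x) := fun l =>
        (hdm k l).comp (by fun_prop)
      calc slopeMeasure m {u | (u, shear u x) ∈ N}
          ≤ slopeMeasure m {u | (u, shear u x) ∈ O k} := measure_mono fun u hu => hNO k hu
        _ = ∫⁻ u in {u | (u, shear u x) ∈ O k}, 1 ∂slopeMeasure m := by simp
        _ ≤ ∫⁻ u in {u | (u, shear u x) ∈ O k}, ∑' l, d k l (u, shear u x) ∂slopeMeasure m :=
            setLIntegral_mono' hm fun u hu => hds k _ hu
        _ ≤ ∫⁻ u, ∑' l, d k l (u, shear u x) ∂slopeMeasure m := setLIntegral_le_lintegral _ _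
        _ = ∑' l, ∫⁻ u, d k l (u, shear u x) ∂slopeMeasure m :=
            lintegral_tsum fun l => (hmd l).aemeasurable
        _ ≤ ∑' l, (1 / 2) ^ k * (1 / 2) ^ l := ENNReal.tsum_le_tsum hk
        _ = (1 / 2) ^ k * 2 := by
            rw [ENNReal.tsum_mul_left, ENNReal.tsum_geometric]; simp
    have hlim : Tendsto (fun k : ℕ => (1 / 2 : ℝ≥0∞) ^ k * 2) atTop (𝓝 (0 * 2)) :=
      ENNReal.Tendsto.mul_const (ENNReal.tendsto_pow_atTop_nhds_zero_of_lt_one (by simp))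
        (Or.inr (by simp))
    rw [zero_mul] at hlim
    rw [ae_iff]
    simpa using ge_of_tendsto hlim hle
  · have hterm : ∀ p : ℕ × ℕ, (∫⁻ z, d p.1 p.2 z ^ 2 ∂(slopeMeasure m).prod volume) /
        ((1 / 2) ^ p.1 * (1 / 2) ^ p.2) ^ 2 ≤ (1 / 4) ^ p.1 * (1 / 4) ^ p.2 := by
      intro p
      refine ENNReal.div_le_of_le_mul ((hdi p.1 p.2).trans (le_of_eq ?_))
      have h16 : (1 / 16 : ℝ≥0∞) = (1 / 4) * (1 / 2) ^ 2 := by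
        simp only [one_div]
        rw [← ENNReal.inv_pow, ← ENNReal.mul_inv (by simp) (by simp)]
        norm_num
      rw [h16]
      ring
    refine ne_top_of_le_ne_top ?_ (ENNReal.tsum_le_tsum hterm)
    rw [ENNReal.tsum_prod (f := fun k l => (1 / 4 : ℝ≥0∞) ^ k * (1 / 4) ^ l)]
    simp_rw [ENNReal.tsum_mul_left]
    rw [ENNReal.tsum_mul_right]
    have : (∑' k : ℕ, (1 / 4 : ℝ≥0∞) ^ k) ≠ ∞ := by
      rw [ENNReal.tsum_geometric]
      refine ENNReal.inv_ne_top.2 (tsub_pos_of_lt ?_).ne'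
      simp
    exact ENNReal.mul_ne_top this this

/-- The tent function of radius `2⁻ᵏ`. -/
noncomputable def tent {m : ℕ} (k : ℕ) (z : Fin m → ℝ) : ℝ≥0∞ := 1 - 2 ^ k * ‖z‖ₑ

/-- The tent function of radius `2⁻ᵏ`, normalised to have integral one. -/
noncomputable def mollifier {m : ℕ} (k : ℕ) (z : Fin m → ℝ) : ℝ≥0∞ :=
  tent k z / ∫⁻ z : Fin m → ℝ, tent k z

@[fun_prop]
lemma measurable_tent {m : ℕ} (k : ℕ) : Measurable (tent (m := m) k) := by
  unfold tent; fun_prop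

@[fun_prop]
lemma measurable_mollifier {m : ℕ} (k : ℕ) : Measurable (mollifier (m := m) k) := by
  unfold mollifier; fun_prop

lemma enorm_le_half_pow_iff {m : ℕ} (k : ℕ) (z : Fin m → ℝ) :
    ‖z‖ₑ ≤ (1 / 2 : ℝ≥0∞) ^ k ↔ ‖z‖ ≤ (1 / 2) ^ k := by
  rw [← ofReal_norm, ← ENNReal.ofReal_le_ofReal_iff (by positivity : (0 : ℝ) ≤ (1 / 2) ^ k),
    ENNReal.ofReal_pow (by norm_num), ENNReal.ofReal_div_of_pos (by norm_num)]
  simp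

lemma two_pow_mul_half_pow (k : ℕ) : (2 : ℝ≥0∞) ^ k * (1 / 2) ^ k = 1 := by
  rw [← mul_pow, ENNReal.mul_div_cancel (by simp) (by simp), one_pow]

lemma tent_eq_zero {m : ℕ} {k : ℕ} {z : Fin m → ℝ} (hz : (1 / 2) ^ k < ‖z‖) : tent k z = 0 := by
  have : (1 / 2 : ℝ≥0∞) ^ k ≤ ‖z‖ₑ := by
    by_contra! h
    exact absurd ((enorm_le_half_pow_iff k z).1 h.le) (not_le.2 hz)
  refine tsub_eq_zero_of_le ?_
  rw [← two_pow_mul_half_pow k]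
  gcongr

lemma mollifier_eq_zero {m : ℕ} {k : ℕ} {z : Fin m → ℝ} (hz : (1 / 2) ^ k < ‖z‖) :
    mollifier k z = 0 := by
  simp [mollifier, tent_eq_zero hz]

lemma le_lintegral_tent (m k : ℕ) :
    (1 / 2 : ℝ≥0∞) * ((1 / 2) ^ k) ^ m ≤ ∫⁻ z : Fin m → ℝ, tent k z := by
  calc (1 / 2 : ℝ≥0∞) * ((1 / 2) ^ k) ^ m
      = ∫⁻ z : Fin m → ℝ in closedBall 0 ((1 / 2) ^ (k + 1)), 1 / 2 := by
        rw [setLIntegral_const, volume_closedBall_pow, pow_succ', ← mul_assoc,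
          ENNReal.mul_div_cancel (by simp) (by simp), one_mul]
    _ ≤ ∫⁻ z : Fin m → ℝ in closedBall 0 ((1 / 2) ^ (k + 1)), tent k z := by
        refine setLIntegral_mono' measurableSet_closedBall fun z hz => ?_
        have hz : ‖z‖ₑ ≤ (1 / 2 : ℝ≥0∞) ^ (k + 1) := by
          rw [enorm_le_half_pow_iff]; simpa using hz
        have : 2 ^ k * ‖z‖ₑ ≤ 1 / 2 := by
          calc 2 ^ k * ‖z‖ₑ ≤ 2 ^ k * (1 / 2 : ℝ≥0∞) ^ (k + 1) := by gcongr
            _ = 1 / 2 := by rw [pow_succ, ← mul_assoc, two_pow_mul_half_pow, one_mul]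
        calc (1 / 2 : ℝ≥0∞) = 1 - 1 / 2 := by simp
          _ ≤ _ := tsub_le_tsub_left this _
    _ ≤ _ := setLIntegral_le_lintegral _ _

lemma lintegral_tent_ne_zero (m k : ℕ) : ∫⁻ z : Fin m → ℝ, tent k z ≠ 0 := by
  refine ne_of_gt (lt_of_lt_of_le (pos_iff_ne_zero.2 ?_) (le_lintegral_tent m k))
  simp

lemma lintegral_tent_ne_top (m k : ℕ) : ∫⁻ z : Fin m → ℝ, tent k z ≠ ∞ := by
  have : ∫⁻ z : Fin m → ℝ, tent k z ≤ volume (closedBall (0 : Fin m → ℝ) ((1 / 2) ^ k)) := by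
    rw [← lintegral_indicator_one measurableSet_closedBall]
    refine lintegral_mono fun z => ?_
    by_cases hz : ‖z‖ ≤ (1 / 2) ^ k
    · rw [indicator_of_mem (by simpa using hz)]
      exact tsub_le_self
    · rw [tent_eq_zero (not_le.1 hz)]; exact zero_le
  exact ne_top_of_le_ne_top (isCompact_closedBall _ _).measure_ne_top this

lemma lintegral_mollifier (m k : ℕ) : ∫⁻ z : Fin m → ℝ, mollifier k z = 1 := by
  simp only [mollifier, div_eq_mul_inv]
  rw [lintegral_mul_const _ (by fun_prop)]
  exact ENNReal.mul_inv_cancel (lintegral_tent_ne_zero m k) (lintegral_tent_ne_top m k)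

lemma inv_lintegral_tent_le (m k : ℕ) :
    (∫⁻ z : Fin m → ℝ, tent k z)⁻¹ ≤ 2 * (2 ^ k) ^ m := by
  rw [ENNReal.inv_le_iff_inv_le]
  refine le_trans (le_of_eq ?_) (le_lintegral_tent m k)
  rw [ENNReal.mul_inv (by simp) (by simp), one_div]
  simp [ENNReal.inv_pow]

lemma mollifier_le {m : ℕ} (k : ℕ) (z : Fin m → ℝ) : mollifier k z ≤ 2 * (2 ^ k) ^ m := by
  rw [mollifier, div_eq_mul_inv]
  refine le_trans ?_ (inv_lintegral_tent_le m k)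
  exact mul_le_of_le_one_left' tsub_le_self

lemma mollifier_le_add {m : ℕ} (k : ℕ) (z z' : Fin m → ℝ) :
    mollifier k z ≤ mollifier k z' + 2 * (2 ^ k) ^ m * 2 ^ k * edist z z' := by
  have h1 : tent k z ≤ tent k z' + 2 ^ k * edist z z' := by
    unfold tent
    rw [tsub_le_iff_right]
    have h2 : ‖z'‖ₑ ≤ edist z z' + ‖z‖ₑ := by
      rw [edist_comm]
      calc ‖z'‖ₑ = ‖(z' - z) + z‖ₑ := by rw [sub_add_cancel]
        _ ≤ _ := by rw [edist_eq_enorm_sub]; exact enorm_add_le _ _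
    calc (1 : ℝ≥0∞) ≤ 1 - 2 ^ k * ‖z'‖ₑ + 2 ^ k * ‖z'‖ₑ := le_tsub_add
      _ ≤ 1 - 2 ^ k * ‖z'‖ₑ + 2 ^ k * (edist z z' + ‖z‖ₑ) := by gcongr
      _ = _ := by ring
  unfold mollifier
  calc _ ≤ (tent k z' + 2 ^ k * edist z z') / ∫⁻ z : Fin m → ℝ, tent k z := by gcongr
    _ = tent k z' / (∫⁻ z : Fin m → ℝ, tent k z) +
        (∫⁻ z : Fin m → ℝ, tent k z)⁻¹ * 2 ^ k * edist z z' := by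
        rw [ENNReal.add_div]; congr 1; rw [div_eq_mul_inv]; ring
    _ ≤ _ := by gcongr; exact inv_lintegral_tent_le m k

/-- The density at `w` of the push-forward of the measure of slopes to lines through `0`. -/
noncomputable def lineKernel {m : ℕ} (w : (Fin m → ℝ) × ℝ) : ℝ≥0∞ :=
  ENNReal.ofReal |(w.2 ^ m)⁻¹| * ENNReal.ofReal (slopeDensity (w.2⁻¹ • w.1))

lemma lintegral_comp_shear {m : ℕ} {w : (Fin m → ℝ) × ℝ} (hw : w.2 ≠ 0)
    {f : (Fin m → ℝ) → ℝ≥0∞} (hf : Measurable f) :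
    ∫⁻ u, f (shear u w) = ENNReal.ofReal |(w.2 ^ m)⁻¹| * ∫⁻ v, f v := by
  have h1 : ∫⁻ u, f (w.1 - w.2 • u) = ∫⁻ v, f (w.1 - v) ∂Measure.map (w.2 • ·) volume := by
    rw [lintegral_map (by fun_prop) (by fun_prop)]
  unfold shear
  rw [h1, Measure.map_addHaar_smul _ hw, lintegral_smul_measure, lintegral_sub_left_eq_self]
  simp

lemma tendsto_lintegral_comp_shear {m : ℕ} {ι : Type*} {l : Filter ι}
    {Ψ : ι → (Fin m → ℝ) → ℝ≥0∞} (hm : ∀ i, Measurable (Ψ i)) (hi : ∀ i, ∫⁻ v, Ψ i v = 1)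
    {r : ι → ℝ} (hsupp : ∀ i v, r i < ‖v‖ → Ψ i v = 0) (hr : Tendsto r l (𝓝 0))
    {w : (Fin m → ℝ) × ℝ} (hw : w.2 ≠ 0) :
    Tendsto (fun i => ∫⁻ u, Ψ i (shear u w) ∂slopeMeasure m) l (𝓝 (lineKernel w)) := by
  set c := ENNReal.ofReal |(w.2 ^ m)⁻¹| with hc
  set D : (Fin m → ℝ) → ℝ≥0∞ := fun u => ENNReal.ofReal (slopeDensity u) with hD
  have hDc : Continuous D := ENNReal.continuous_ofReal.comp continuous_slopeDensity
  set u₀ := w.2⁻¹ • w.1 with hu₀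
  rw [lineKernel, ENNReal.tendsto_nhds (by finiteness)]
  intro ε hε
  obtain ⟨ε', hε', hle⟩ : ∃ ε' : ℝ≥0∞, 0 < ε' ∧ c * ε' ≤ ε := by
    refine ⟨ε / (c + 1), ENNReal.div_pos hε.ne' (by finiteness), ?_⟩
    calc c * (ε / (c + 1)) ≤ (c + 1) * (ε / (c + 1)) := by gcongr; exact le_self_add
      _ = ε := ENNReal.mul_div_cancel (by simp) (by finiteness)
  have hnear := (ENNReal.tendsto_nhds (a := D u₀) (by finiteness)).1 hDc.continuousAt ε' hε'
  obtain ⟨δ, hδ, hball⟩ := Metric.eventually_nhds_iff.1 hnear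
  have hw0 : 0 < |w.2| := abs_pos.2 hw
  filter_upwards [hr.eventually (gt_mem_nhds (mul_pos hw0 hδ))] with i hri
  have hclose : ∀ u, Ψ i (shear u w) ≠ 0 → D u ∈ Icc (D u₀ - ε') (D u₀ + ε') := by
    intro u hu
    refine hball ?_
    have h1 : ‖shear u w‖ ≤ r i := by
      by_contra! h
      exact hu (hsupp i _ h)
    have h2 : shear u w = -(w.2 • (u - u₀)) := by
      simp [shear, hu₀, smul_sub, smul_smul, hw]
    rw [h2, norm_neg, norm_smul, Real.norm_eq_abs] at h1
    rw [dist_eq_norm]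
    exact lt_of_mul_lt_mul_left (h1.trans_lt hri) hw0.le
  have hmi : Measurable fun u => Ψ i (shear u w) := (hm i).comp (by fun_prop)
  have hint : ∫⁻ u, Ψ i (shear u w) ∂slopeMeasure m = ∫⁻ u, D u * Ψ i (shear u w) := by
    rw [slopeMeasure, lintegral_withDensity_eq_lintegral_mul _ hDc.measurable hmi]
    rfl
  have hΨ : ∫⁻ u, Ψ i (shear u w) = c := by
    rw [lintegral_comp_shear hw (hm i), hi, mul_one]
  rw [hint]
  constructor
  · calc c * D u₀ - ε ≤ c * D u₀ - c * ε' := tsub_le_tsub_left hle _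
      _ = c * (D u₀ - ε') := (ENNReal.mul_sub fun _ _ => by finiteness).symm
      _ = ∫⁻ u, (D u₀ - ε') * Ψ i (shear u w) := by
          rw [lintegral_const_mul _ hmi, hΨ, mul_comm]
      _ ≤ _ := by
          refine lintegral_mono fun u => ?_
          by_cases hu : Ψ i (shear u w) = 0
          · simp [hu]
          · exact mul_le_mul_left (hclose u hu).1 _
  · calc ∫⁻ u, D u * Ψ i (shear u w) ≤ ∫⁻ u, (D u₀ + ε') * Ψ i (shear u w) := by
          refine lintegral_mono fun u => ?_
          by_cases hu : Ψ i (shear u w) = 0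
          · simp [hu]
          · exact mul_le_mul_left (hclose u hu).2 _
      _ = c * D u₀ + c * ε' := by
          rw [lintegral_const_mul _ hmi, hΨ, mul_comm, mul_add]
      _ ≤ _ := by gcongr

/-- Cross-correlation of two mollifiers. -/
noncomputable def corr {m : ℕ} (k l : ℕ) (s : Fin m → ℝ) : ℝ≥0∞ :=
  ∫⁻ w, mollifier k w * mollifier l (w - s)

@[fun_prop]
lemma measurable_corr {m : ℕ} (k l : ℕ) : Measurable (corr (m := m) k l) := by
  unfold corr
  refine Measurable.lintegral_prod_right (f := fun s w => mollifier k w * mollifier l (w - s)) ?_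
  fun_prop

lemma lintegral_corr (m k l : ℕ) : ∫⁻ s : Fin m → ℝ, corr k l s = 1 := by
  unfold corr
  rw [lintegral_lintegral_swap (by fun_prop)]
  calc _ = ∫⁻ w : Fin m → ℝ, mollifier k w := by
        refine lintegral_congr fun w => ?_
        rw [lintegral_const_mul _ (by fun_prop), lintegral_sub_left_eq_self, lintegral_mollifier,
          mul_one]
    _ = 1 := lintegral_mollifier m k

lemma corr_eq_zero {m : ℕ} {k l : ℕ} {s : Fin m → ℝ} (hs : (1 / 2) ^ k + (1 / 2) ^ l < ‖s‖) :
    corr k l s = 0 := by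
  unfold corr
  have : ∀ w, mollifier k w * mollifier l (w - s) = 0 := by
    intro w
    rcases lt_or_ge ((1 / 2) ^ k) ‖w‖ with h | h
    · rw [mollifier_eq_zero h, zero_mul]
    · rw [mollifier_eq_zero (k := l), mul_zero]
      have := norm_sub_norm_le s w
      rw [norm_sub_rev] at this
      linarith
  simp [this]

lemma corr_le {m : ℕ} (k l : ℕ) (s : Fin m → ℝ) : corr k l s ≤ 2 * (2 ^ min k l) ^ m := by
  unfold corr
  rcases le_total k l with h | h
  · rw [min_eq_left h]
    calc _ ≤ ∫⁻ w, 2 * (2 ^ k) ^ m * mollifier l (w - s) := by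
          gcongr with w; exact mollifier_le k w
      _ = _ := by
          rw [lintegral_const_mul _ (by fun_prop), lintegral_sub_right_eq_self,
            lintegral_mollifier, mul_one]
  · rw [min_eq_right h]
    calc _ ≤ ∫⁻ w, mollifier k w * (2 * (2 ^ l) ^ m) := by
          gcongr with w; exact mollifier_le l _
      _ = _ := by
          rw [lintegral_mul_const _ (by fun_prop), lintegral_mollifier, one_mul]

lemma lintegral_corr_shear_le {m : ℕ} (k l : ℕ) (w : (Fin m → ℝ) × ℝ) :
    ∫⁻ u, corr k l (shear u w) ∂slopeMeasure m ≤
      2 * 2 ^ m * shearConst m * ‖w‖ₑ ^ (-(m : ℝ)) := by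
  set j := min k l with hj
  have hm : MeasurableSet {u : Fin m → ℝ | ‖shear u w‖ ≤ 2 * (1 / 2) ^ j} :=
    (isClosed_le (by fun_prop) continuous_const).measurableSet
  have h1 : ∀ u, corr k l (shear u w) ≤
      {u : Fin m → ℝ | ‖shear u w‖ ≤ 2 * (1 / 2) ^ j}.indicator (fun _ => 2 * (2 ^ j) ^ m) u := by
    intro u
    by_cases hu : ‖shear u w‖ ≤ 2 * (1 / 2) ^ j
    · rw [indicator_of_mem (by exact hu)]; exact corr_le k l _
    · rw [corr_eq_zero]
      · exact zero_le
      · have h2 := pow_le_pow_of_le_one (by norm_num : (0 : ℝ) ≤ 1 / 2) (by norm_num)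
          (min_le_left k l)
        have h3 := pow_le_pow_of_le_one (by norm_num : (0 : ℝ) ≤ 1 / 2) (by norm_num)
          (min_le_right k l)
        rw [← hj] at h2 h3
        linarith [not_le.1 hu]
  have h2 : ENNReal.ofReal (2 * (1 / 2) ^ j) = 2 * (1 / 2) ^ j := by
    rw [ENNReal.ofReal_mul (by norm_num), ENNReal.ofReal_pow (by norm_num),
      ENNReal.ofReal_div_of_pos (by norm_num)]
    simp
  calc _ ≤ 2 * (2 ^ j) ^ m * slopeMeasure m {u | ‖shear u w‖ ≤ 2 * (1 / 2) ^ j} := by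
        refine (lintegral_mono h1).trans ?_
        rw [lintegral_indicator hm, setLIntegral_const]
    _ ≤ 2 * (2 ^ j) ^ m * (shearConst m * (ENNReal.ofReal (2 * (1 / 2) ^ j) / ‖w‖ₑ) ^ m) := by
        gcongr
        exact slopeMeasure_shear_le w (by positivity)
    _ = 2 * shearConst m * (2 ^ j * ((2 * (1 / 2) ^ j) * ‖w‖ₑ⁻¹)) ^ m := by
        rw [h2, div_eq_mul_inv, mul_pow]; ring
    _ = 2 * shearConst m * (2 * ‖w‖ₑ⁻¹) ^ m := by
        congr 2
        calc _ = (2 ^ j * (1 / 2) ^ j) * (2 * ‖w‖ₑ⁻¹) := by ring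
          _ = _ := by rw [two_pow_mul_half_pow, one_mul]
    _ = _ := by
        rw [mul_pow, ENNReal.rpow_neg, ENNReal.rpow_natCast, ENNReal.inv_pow]; ring

lemma lintegral_pair {m : ℕ} (μ : Measure ((Fin m → ℝ) × ℝ)) [SFinite μ] (k l : ℕ)
    {G : ((Fin m → ℝ) × ℝ) × ((Fin m → ℝ) × ℝ) → ℝ≥0∞} (hG : Measurable G) :
    ∫⁻ z, ∫⁻ p, mollifier k (shear z.1 p.1 - z.2) * mollifier l (shear z.1 p.2 - z.2) * G p
        ∂μ.prod μ ∂(slopeMeasure m).prod volume =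
      ∫⁻ p, (∫⁻ u, corr k l (shear u (p.1 - p.2)) ∂slopeMeasure m) * G p ∂μ.prod μ := by
  rw [lintegral_lintegral_swap (by fun_prop)]
  refine lintegral_congr fun p => ?_
  rw [lintegral_mul_const _ (by fun_prop)]
  congr 1
  rw [lintegral_prod _ (by fun_prop)]
  refine lintegral_congr fun u => ?_
  rw [corr, ← lintegral_sub_left_eq_self _ (shear u p.1)]
  refine lintegral_congr fun v => ?_
  simp only [shear_sub]
  rw [sub_sub_self, ← sub_add, sub_sub_eq_add_sub, sub_add_eq_add_sub, add_comm v]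

/-- The mollified density on the lines of a measure. -/
noncomputable def lineDensity {m : ℕ} (μ : Measure ((Fin m → ℝ) × ℝ)) (k : ℕ)
    (z : (Fin m → ℝ) × (Fin m → ℝ)) : ℝ≥0∞ :=
  ∫⁻ y, mollifier k (shear z.1 y - z.2) ∂μ

@[fun_prop]
lemma measurable_lineDensity {m : ℕ} (μ : Measure ((Fin m → ℝ) × ℝ)) [SFinite μ] (k : ℕ) :
    Measurable (lineDensity μ k) := by
  unfold lineDensity
  exact Measurable.lintegral_prod_right (f := fun (z : (Fin m → ℝ) × (Fin m → ℝ)) y =>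
    mollifier k (shear z.1 y - z.2)) (by fun_prop)

lemma equiUsc_lineDensity {m : ℕ} (μ : Measure ((Fin m → ℝ) × ℝ)) [IsFiniteMeasure μ] (k : ℕ) :
    EquiUsc (lineDensity μ k) := by
  intro ε hε
  set L : ℝ≥0∞ := 2 * (2 ^ k) ^ m * 2 ^ k * μ univ with hL
  have hLt : L ≠ ∞ := by finiteness
  obtain ⟨δ, hδ, hle⟩ : ∃ δ : ℝ≥0∞, 0 < δ ∧ L * δ ≤ ε := by
    refine ⟨ε / (L + 1), ENNReal.div_pos hε (by finiteness), ?_⟩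
    calc L * (ε / (L + 1)) ≤ (L + 1) * (ε / (L + 1)) := by gcongr; exact le_self_add
      _ = ε := ENNReal.mul_div_cancel (by simp) (by finiteness)
  obtain ⟨δ', hδ'0, hδ'⟩ := ENNReal.lt_iff_exists_nnreal_btwn.1 hδ
  refine ⟨δ', by simpa using hδ'0, fun u v v' hv => ?_⟩
  have he : ∀ y, edist (shear u y - v) (shear u y - v') ≤ δ := by
    intro y
    rw [edist_dist, dist_sub_left]
    refine le_trans ?_ hδ'.le
    rw [← ENNReal.ofReal_coe_nnreal]
    exact ENNReal.ofReal_le_ofReal hv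
  calc lineDensity μ k (u, v)
      ≤ ∫⁻ y, (mollifier k (shear u y - v') + 2 * (2 ^ k) ^ m * 2 ^ k * δ) ∂μ := by
        refine lintegral_mono fun y => (mollifier_le_add k _ (shear u y - v')).trans ?_
        gcongr
        exact he y
    _ = lineDensity μ k (u, v') + L * δ := by
        rw [lintegral_add_right _ measurable_const, lintegral_const, lineDensity, hL]; ring
    _ ≤ _ := by gcongr

lemma lineDensity_ne_top {m : ℕ} (μ : Measure ((Fin m → ℝ) × ℝ)) [IsFiniteMeasure μ] (k : ℕ)
    (z : (Fin m → ℝ) × (Fin m → ℝ)) : lineDensity μ k z ≠ ∞ := by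
  refine ne_top_of_le_ne_top ?_ (lintegral_mono fun y => mollifier_le k _)
  rw [lintegral_const]
  finiteness

lemma lintegral_lineDensity_mul {m : ℕ} (μ : Measure ((Fin m → ℝ) × ℝ)) [SFinite μ]
    (k l : ℕ) :
    ∫⁻ z, lineDensity μ k z * lineDensity μ l z ∂(slopeMeasure m).prod volume =
      ∫⁻ p, ∫⁻ u, corr k l (shear u (p.1 - p.2)) ∂slopeMeasure m ∂μ.prod μ := by
  have := lintegral_pair μ k l (G := fun _ => 1) measurable_const
  simp only [mul_one] at this
  rw [← this]
  refine lintegral_congr fun z => ?_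
  rw [lineDensity, lineDensity, ← lintegral_prod_mul (by fun_prop) (by fun_prop)]

lemma rpow_neg_le_tsum {q : ℝ} (hq : 0 ≤ q) (d : ℝ≥0∞) :
    d ^ (-q) ≤ 1 + ∑' k : ℕ, if d ≤ (1 / 2) ^ k then ((2 : ℝ≥0∞) ^ (k + 1)) ^ q else 0 := by
  rcases le_or_gt 1 d with h1 | h1
  · refine le_trans ?_ le_self_add
    rw [ENNReal.rpow_neg]
    exact ENNReal.inv_le_one.2 (by simpa using ENNReal.rpow_le_rpow h1 hq)
  refine le_trans ?_ le_add_self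
  rcases eq_or_ne d 0 with rfl | h0
  · have : (∑' k : ℕ, if (0 : ℝ≥0∞) ≤ (1 / 2) ^ k then ((2 : ℝ≥0∞) ^ (k + 1)) ^ q else 0) = ∞ := by
      rw [eq_top_iff, ← ENNReal.tsum_const_eq_top_of_ne_zero (α := ℕ) one_ne_zero]
      refine ENNReal.tsum_le_tsum fun k => ?_
      simp only [zero_le, if_true]
      have h2 : (1 : ℝ≥0∞) ≤ 2 ^ (k + 1) := one_le_pow₀ (by norm_num)
      simpa using ENNReal.rpow_le_rpow h2 hq
    rw [this]; exact le_top
  · obtain ⟨k, hk1, hk2⟩ : ∃ k : ℕ, (1 / 2 : ℝ≥0∞) ^ (k + 1) ≤ d ∧ d ≤ (1 / 2) ^ k := by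
      lift d to ℝ≥0 using h1.ne_top
      obtain ⟨k, hk1, hk2⟩ := exists_nat_pow_near_of_lt_one (x := d) (y := (1 / 2 : ℝ≥0))
        (pos_iff_ne_zero.2 (by simpa using h0)) (by exact_mod_cast h1.le) (by simp)
        (by rw [← NNReal.coe_lt_coe]; norm_num)
      have hc : ∀ k : ℕ, (((1 / 2 : ℝ≥0) ^ k : ℝ≥0) : ℝ≥0∞) = (1 / 2) ^ k := by
        intro k; push_cast; simp
      exact ⟨k, by rw [← hc]; exact_mod_cast hk1.le, by rw [← hc]; exact_mod_cast hk2⟩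
    refine le_trans ?_ (ENNReal.le_tsum k)
    rw [if_pos hk2, ENNReal.rpow_neg, ← ENNReal.inv_rpow]
    refine ENNReal.rpow_le_rpow ?_ hq
    rw [ENNReal.inv_le_iff_inv_le]
    refine le_trans (le_of_eq ?_) hk1
    simp [ENNReal.inv_pow]

/-- Riesz potentials of a Frostman measure are bounded. -/
lemma exists_lintegral_edist_rpow_le {X : Type*} [MetricSpace X] [MeasurableSpace X] [BorelSpace X]
    {s q : ℝ} (hq : 0 ≤ q) (hqs : q < s) {μ : Measure X} [IsFiniteMeasure μ] {C : ℝ≥0∞}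
    (hC : C ≠ ∞) (hμ : ∀ y r, 0 < r → μ (closedBall y r) ≤ C * ENNReal.ofReal r ^ s) :
    ∃ M ≠ ∞, ∀ y, ∫⁻ z, edist y z ^ (-q) ∂μ ≤ M := by
  refine ⟨μ univ + ∑' k : ℕ, ((2 : ℝ≥0∞) ^ (k + 1)) ^ q * (C * ((1 / 2) ^ k) ^ s), ?_, ?_⟩
  · refine ENNReal.add_ne_top.2 ⟨by finiteness, ?_⟩
    have hterm : ∀ k : ℕ, ((2 : ℝ≥0∞) ^ (k + 1)) ^ q * (C * ((1 / 2) ^ k) ^ s) =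
        2 ^ q * C * (2 ^ q * (1 / 2) ^ s) ^ k := by
      intro k
      rw [pow_succ', ENNReal.mul_rpow_of_nonneg _ _ hq, mul_pow, ← ENNReal.rpow_natCast_mul,
        ← ENNReal.rpow_natCast_mul, mul_comm (k : ℝ), mul_comm (k : ℝ) s,
        ENNReal.rpow_mul_natCast, ENNReal.rpow_mul_natCast]
      ring
    simp_rw [hterm]
    rw [ENNReal.tsum_mul_left, ENNReal.tsum_geometric]
    have h2q : (2 : ℝ≥0∞) ^ q ≠ ∞ := ENNReal.rpow_ne_top_of_nonneg hq (by simp)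
    refine ENNReal.mul_ne_top (ENNReal.mul_ne_top h2q hC)
      (ENNReal.inv_ne_top.2 (tsub_pos_of_lt ?_).ne')
    calc (2 : ℝ≥0∞) ^ q * (1 / 2) ^ s < 2 ^ q * (1 / 2) ^ q := by
          refine ENNReal.mul_lt_mul_right ?_ h2q ?_
          · simp
          · exact ENNReal.rpow_lt_rpow_of_exponent_gt (by simp) (by simp) hqs
      _ = 1 := by
          rw [← ENNReal.mul_rpow_of_nonneg _ _ hq, ENNReal.mul_div_cancel (by simp) (by simp),
            ENNReal.one_rpow]
  · intro y
    have hset : ∀ k : ℕ, {z | edist y z ≤ (1 / 2) ^ k} = closedBall y ((1 / 2) ^ k) := by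
      intro k
      ext z
      rw [mem_closedBall, mem_ofPred_eq, edist_comm, edist_dist,
        ← ENNReal.ofReal_le_ofReal_iff (by positivity : (0 : ℝ) ≤ (1 / 2) ^ k),
        ENNReal.ofReal_pow (by norm_num), ENNReal.ofReal_div_of_pos (by norm_num)]
      simp
    have hm : ∀ k : ℕ, MeasurableSet {z | edist y z ≤ (1 / 2) ^ k} := fun k => by
      rw [hset]; exact measurableSet_closedBall
    calc ∫⁻ z, edist y z ^ (-q) ∂μ ≤ ∫⁻ z, (1 + ∑' k : ℕ,
          {z | edist y z ≤ (1 / 2) ^ k}.indicator (fun _ => ((2 : ℝ≥0∞) ^ (k + 1)) ^ q) z) ∂μ :=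
          lintegral_mono fun z => by
            simpa only [indicator_apply, mem_ofPred_eq] using rpow_neg_le_tsum hq (edist y z)
      _ = μ univ + ∑' k : ℕ, ((2 : ℝ≥0∞) ^ (k + 1)) ^ q * μ (closedBall y ((1 / 2) ^ k)) := by
          rw [lintegral_add_left measurable_const, lintegral_one,
            lintegral_tsum fun k => (measurable_const.indicator (hm k)).aemeasurable]
          congr 1
          refine tsum_congr fun k => ?_
          rw [lintegral_indicator (hm k), setLIntegral_const, hset]
      _ ≤ _ := by
          gcongr with k
          refine (hμ y _ (by positivity)).trans (le_of_eq ?_)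
          rw [ENNReal.ofReal_pow (by norm_num), ENNReal.ofReal_div_of_pos (by norm_num)]
          simp

lemma lintegral_enorm_sub_rpow_ne_top {m : ℕ} {s q : ℝ} (hq : 0 ≤ q) (hqs : q < s)
    {μ : Measure ((Fin m → ℝ) × ℝ)} [IsFiniteMeasure μ] {C : ℝ≥0∞} (hC : C ≠ ∞)
    (hμ : ∀ y r, 0 < r → μ (closedBall y r) ≤ C * ENNReal.ofReal r ^ s) :
    ∫⁻ p, ‖p.1 - p.2‖ₑ ^ (-q) ∂μ.prod μ ≠ ∞ := by
  obtain ⟨M, hM, hle⟩ := exists_lintegral_edist_rpow_le hq hqs hC hμ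
  rw [lintegral_prod _ (by fun_prop)]
  simp only [← edist_eq_enorm_sub]
  refine ne_top_of_le_ne_top ?_ (lintegral_mono hle)
  rw [lintegral_const]
  finiteness

lemma ae_sub_snd_ne_zero {m : ℕ} {μ : Measure ((Fin m → ℝ) × ℝ)} [SFinite μ]
    (hplane : ∀ b, μ {y | y.2 = b} = 0) : ∀ᵐ p ∂μ.prod μ, (p.1 - p.2).2 ≠ 0 := by
  have hm : MeasurableSet {p : ((Fin m → ℝ) × ℝ) × ((Fin m → ℝ) × ℝ) | (p.1 - p.2).2 = 0} :=
    (isClosed_eq (by fun_prop) continuous_const).measurableSet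
  have : (μ.prod μ) {p | (p.1 - p.2).2 = 0} = 0 := by
    rw [Measure.measure_prod_null hm]
    refine Eventually.of_forall fun y => ?_
    refine measure_mono_null (fun z hz => ?_) (hplane y.2)
    have hz : y.2 - z.2 = 0 := hz
    simp only [mem_ofPred_eq]; linarith
  rw [ae_iff]
  simpa using this

lemma tendsto_lintegral_lineDensity_mul {m : ℕ} {s : ℝ} (hs : (m : ℝ) < s)
    {μ : Measure ((Fin m → ℝ) × ℝ)} [IsFiniteMeasure μ] {C : ℝ≥0∞} (hC : C ≠ ∞)
    (hμ : ∀ y r, 0 < r → μ (closedBall y r) ≤ C * ENNReal.ofReal r ^ s)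
    (hplane : ∀ b, μ {y | y.2 = b} = 0) :
    ∃ E ≠ ∞, Tendsto (fun k : ℕ × ℕ =>
      ∫⁻ z, lineDensity μ k.1 z * lineDensity μ k.2 z ∂(slopeMeasure m).prod volume)
      atTop (𝓝 E) := by
  have hfin := lintegral_enorm_sub_rpow_ne_top m.cast_nonneg hs hC hμ
  have hb : ∫⁻ p, 2 * 2 ^ m * shearConst m * ‖p.1 - p.2‖ₑ ^ (-(m : ℝ)) ∂μ.prod μ ≠ ∞ := by
    rw [lintegral_const_mul _ (by fun_prop)]
    exact ENNReal.mul_ne_top (ENNReal.mul_ne_top (by finiteness) (shearConst_ne_top m)) hfin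
  have hlim : Tendsto (fun k : ℕ × ℕ =>
      ∫⁻ z, lineDensity μ k.1 z * lineDensity μ k.2 z ∂(slopeMeasure m).prod volume)
      atTop (𝓝 (∫⁻ p, lineKernel (p.1 - p.2) ∂μ.prod μ)) := by
    simp_rw [lintegral_lineDensity_mul]
    refine tendsto_lintegral_filter_of_dominated_convergence
      (fun p => 2 * 2 ^ m * shearConst m * ‖p.1 - p.2‖ₑ ^ (-(m : ℝ)))
      (Eventually.of_forall fun k => ?_)
      (Eventually.of_forall fun k => Eventually.of_forall fun p => lintegral_corr_shear_le _ _ _)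
      hb ?_
    · exact Measurable.lintegral_prod_right
        (f := fun (p : ((Fin m → ℝ) × ℝ) × ((Fin m → ℝ) × ℝ)) u =>
          corr k.1 k.2 (shear u (p.1 - p.2))) (by fun_prop)
    · filter_upwards [ae_sub_snd_ne_zero hplane] with p hp
      refine tendsto_lintegral_comp_shear (Ψ := fun k : ℕ × ℕ => corr k.1 k.2)
        (fun k => measurable_corr _ _) (fun k => lintegral_corr m _ _)
        (r := fun k => (1 / 2) ^ k.1 + (1 / 2) ^ k.2) (fun k v hv => corr_eq_zero hv) ?_ hp
      have h1 : Tendsto (fun k : ℕ => (1 / 2 : ℝ) ^ k) atTop (𝓝 0) :=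
        tendsto_pow_atTop_nhds_zero_of_lt_one (by norm_num) (by norm_num)
      rw [← prod_atTop_atTop_eq]
      simpa using (h1.comp tendsto_fst).add (h1.comp tendsto_snd)
  refine ⟨_, ne_top_of_le_ne_top hb (le_of_tendsto' hlim fun k => ?_), hlim⟩
  rw [lintegral_lineDensity_mul]
  exact lintegral_mono fun p => lintegral_corr_shear_le _ _ _

/-- The absolute difference of the mollified densities at two scales. -/
noncomputable def densityGap {m : ℕ} (μ : Measure ((Fin m → ℝ) × ℝ)) (k l : ℕ)
    (z : (Fin m → ℝ) × (Fin m → ℝ)) : ℝ≥0∞ :=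
  (lineDensity μ k z - lineDensity μ l z) + (lineDensity μ l z - lineDensity μ k z)

lemma sq_tsub_add_tsub_add {a b : ℝ≥0∞} (ha : a ≠ ∞) (hb : b ≠ ∞) :
    ((a - b) + (b - a)) ^ 2 + 2 * (a * b) = a * a + b * b := by
  wlog h : a ≤ b generalizing a b
  · have := this hb ha (le_of_not_ge h)
    rw [add_comm (a - b), mul_comm a b, this, add_comm]
  rw [tsub_eq_zero_of_le h, zero_add]
  obtain ⟨c, rfl⟩ := exists_add_of_le h
  rw [ENNReal.add_sub_cancel_left ha]
  ring

lemma tendsto_lintegral_densityGap_sq {m : ℕ} {s : ℝ} (hs : (m : ℝ) < s)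
    {μ : Measure ((Fin m → ℝ) × ℝ)} [IsFiniteMeasure μ] {C : ℝ≥0∞} (hC : C ≠ ∞)
    (hμ : ∀ y r, 0 < r → μ (closedBall y r) ≤ C * ENNReal.ofReal r ^ s)
    (hplane : ∀ b, μ {y | y.2 = b} = 0) :
    Tendsto (fun k : ℕ × ℕ => ∫⁻ z, densityGap μ k.1 k.2 z ^ 2 ∂(slopeMeasure m).prod volume)
      atTop (𝓝 0) := by
  obtain ⟨E, hE, hlim⟩ := tendsto_lintegral_lineDensity_mul hs hC hμ hplane
  set I : ℕ × ℕ → ℝ≥0∞ := fun k =>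
    ∫⁻ z, lineDensity μ k.1 z * lineDensity μ k.2 z ∂(slopeMeasure m).prod volume with hI
  have hid : ∀ k : ℕ × ℕ, ∫⁻ z, densityGap μ k.1 k.2 z ^ 2 ∂(slopeMeasure m).prod volume +
      2 * I k = I (k.1, k.1) + I (k.2, k.2) := by
    intro k
    simp only [hI]
    rw [← lintegral_const_mul _ (by fun_prop), ← lintegral_add_right _ (by fun_prop),
      ← lintegral_add_right _ (by fun_prop)]
    exact lintegral_congr fun z =>
      sq_tsub_add_tsub_add (lineDensity_ne_top μ _ z) (lineDensity_ne_top μ _ z)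
  have h1 : Tendsto (fun k : ℕ × ℕ => I (k.1, k.1)) atTop (𝓝 E) := by
    refine hlim.comp ?_
    rw [← prod_atTop_atTop_eq]
    exact tendsto_fst.prodMk tendsto_fst
  have h2 : Tendsto (fun k : ℕ × ℕ => I (k.2, k.2)) atTop (𝓝 E) := by
    refine hlim.comp ?_
    rw [← prod_atTop_atTop_eq]
    exact tendsto_snd.prodMk tendsto_snd
  have h3 : Tendsto (fun k => (I (k.1, k.1) + I (k.2, k.2)) - 2 * I k) atTop
      (𝓝 ((E + E) - 2 * E)) :=
    ENNReal.Tendsto.sub (h1.add h2) (ENNReal.Tendsto.const_mul hlim (Or.inr (by simp)))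
      (Or.inl (by finiteness))
  rw [two_mul, tsub_self] at h3
  refine h3.congr' ?_
  filter_upwards [hlim.eventually_ne hE] with k hk
  rw [← hid k, ENNReal.add_sub_cancel_right (ENNReal.mul_ne_top (by simp) hk)]

lemma lintegral_lineDensity_shear {m : ℕ} (μ : Measure ((Fin m → ℝ) × ℝ)) [SFinite μ] (k : ℕ)
    (x : (Fin m → ℝ) × ℝ) : ∫⁻ u, lineDensity μ k (u, shear u x) ∂slopeMeasure m =
      ∫⁻ y, ∫⁻ u, mollifier k (shear u (y - x)) ∂slopeMeasure m ∂μ := by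
  unfold lineDensity
  rw [lintegral_lintegral_swap (by fun_prop)]
  simp only [shear_sub]

lemma lintegral_lineKernel_pos {m : ℕ} {μ : Measure ((Fin m → ℝ) × ℝ)}
    (hplane : ∀ b, μ {y | y.2 = b} = 0) (hμ : μ ≠ 0) (x : (Fin m → ℝ) × ℝ) :
    0 < ∫⁻ y, lineKernel (y - x) ∂μ := by
  rw [pos_iff_ne_zero]
  intro h
  have hm : Measurable fun y : (Fin m → ℝ) × ℝ => lineKernel (y - x) := by
    unfold lineKernel
    have := (continuous_slopeDensity (m := m)).measurable
    fun_prop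
  rw [lintegral_eq_zero_iff hm] at h
  have h2 : ∀ᵐ y ∂μ, y.2 ≠ x.2 := by rw [ae_iff]; simpa using hplane x.2
  refine hμ (ae_eq_bot.1 (eventually_false_iff_eq_bot.1 ?_))
  filter_upwards [h, h2] with y hy hy2
  have h3 : (y - x).2 ≠ 0 := sub_ne_zero.2 hy2
  have h4 : lineKernel (y - x) ≠ 0 := by
    unfold lineKernel
    refine mul_ne_zero ?_ ?_
    · have := pow_pos (abs_pos.2 h3) m
      simpa using this
    · simpa using slopeDensity_pos _
  exact h4 hy

/-- Off a small exceptional set, lines through a point see the measure. -/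
lemma exists_subseq_not_ae_liminf_eq_zero {m : ℕ} {s : ℝ} (hs : (m : ℝ) < s)
    {μ : Measure ((Fin m → ℝ) × ℝ)} [IsFiniteMeasure μ] (hμ0 : μ ≠ 0) {C : ℝ≥0∞} (hC : C ≠ ∞)
    (hμ : ∀ y r, 0 < r → μ (closedBall y r) ≤ C * ENNReal.ofReal r ^ s)
    (hplane : ∀ b, μ {y | y.2 = b} = 0) :
    ∃ σ : ℕ → ℕ, StrictMono σ ∧ ∃ B : Set ((Fin m → ℝ) × ℝ), (∀ t : ℝ, (m : ℝ) < t → μH[t] B = 0) ∧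
      ∀ x ∉ B, ¬ ∀ᵐ u ∂slopeMeasure m,
        liminf (fun k => lineDensity μ (σ k) (u, shear u x)) atTop = 0 := by
  have hgap := tendsto_lintegral_densityGap_sq hs hC hμ hplane
  obtain ⟨σ, hσ, hσP⟩ := extraction_forall_of_eventually'
    (P := fun i N => ∀ k ≥ N, ∀ l ≥ N,
      ∫⁻ z, densityGap μ k l z ^ 2 ∂(slopeMeasure m).prod volume ≤ (1 / 16) ^ i) (by
      intro i
      have h0 : 0 < (1 / 16 : ℝ≥0∞) ^ i := pos_iff_ne_zero.2 (pow_ne_zero _ (by simp))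
      obtain ⟨N, hN⟩ := eventually_atTop.1 (hgap.eventually_le_const h0)
      refine ⟨max N.1 N.2, fun M hM k hk l hl => hN (k, l) ⟨?_, ?_⟩⟩
      · exact (le_max_left _ _).trans (hM.trans hk)
      · exact (le_max_right _ _).trans (hM.trans hl))
  set h : ℕ → (Fin m → ℝ) × (Fin m → ℝ) → ℝ≥0∞ := fun i => densityGap μ (σ i) (σ (i + 1)) with hh
  have hm : ∀ i, Measurable (h i) := fun i => by simp only [hh]; unfold densityGap; fun_prop
  have hu : ∀ i, EquiUsc (h i) := fun i =>
    ((equiUsc_lineDensity μ _).tsub (equiUsc_lineDensity μ _)).add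
      ((equiUsc_lineDensity μ _).tsub (equiUsc_lineDensity μ _))
  have hi : ∀ i, ∫⁻ z, h i z ^ 2 ∂(slopeMeasure m).prod volume ≤ (1 / 16) ^ i := fun i =>
    hσP i _ le_rfl _ (hσ.monotone i.le_succ)
  refine ⟨σ, hσ, {x | ¬ ∀ᶠ i in cofinite,
    ∫⁻ u, h i (u, shear u x) ∂slopeMeasure m ≤ (1 / 2) ^ i}, ?_, ?_⟩
  · intro t ht
    refine hausdorffMeasure_not_eventually_le_eq_zero ht hm hu (fun i => by simp)
      (fun i => ENNReal.pow_ne_top (by simp)) ?_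
    have hterm : ∀ i : ℕ, (∫⁻ z, h i z ^ 2 ∂(slopeMeasure m).prod volume) /
        ((1 / 2) ^ i) ^ 2 ≤ (1 / 4) ^ i := by
      intro i
      refine ENNReal.div_le_of_le_mul ((hi i).trans (le_of_eq ?_))
      have h16 : (1 / 16 : ℝ≥0∞) = (1 / 4) * (1 / 2) ^ 2 := by
        simp only [one_div]
        rw [← ENNReal.inv_pow, ← ENNReal.mul_inv (by simp) (by simp)]
        norm_num
      rw [h16]
      ring
    refine ne_top_of_le_ne_top ?_ (ENNReal.tsum_le_tsum hterm)
    rw [ENNReal.tsum_geometric]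
    refine ENNReal.inv_ne_top.2 (tsub_pos_of_lt ?_).ne'
    simp
  · intro x hx hae
    simp only [mem_ofPred_eq, not_not, Nat.cofinite_eq_atTop] at hx
    obtain ⟨N, hN⟩ := eventually_atTop.1 hx
    have hstep : ∀ u n j, lineDensity μ (σ n) (u, shear u x) ≤
        lineDensity μ (σ (n + j)) (u, shear u x) + ∑ i ∈ Finset.range j, h (n + i) (u, shear u x) := by
      intro u n j
      induction j with
      | zero => simp
      | succ j ih =>
        refine ih.trans ?_
        rw [Finset.sum_range_succ, add_comm (∑ i ∈ _, _), ← add_assoc]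
        gcongr
        calc _ ≤ lineDensity μ (σ (n + j + 1)) (u, shear u x) +
              (lineDensity μ (σ (n + j)) (u, shear u x) -
                lineDensity μ (σ (n + j + 1)) (u, shear u x)) := le_add_tsub
          _ ≤ _ := add_le_add le_rfl le_self_add
    have hle : ∀ n, ∀ᵐ u ∂slopeMeasure m, lineDensity μ (σ n) (u, shear u x) ≤
        ∑' i, h (n + i) (u, shear u x) := by
      intro n
      filter_upwards [hae] with u hu
      have : lineDensity μ (σ n) (u, shear u x) - ∑' i, h (n + i) (u, shear u x) ≤
          liminf (fun k => lineDensity μ (σ k) (u, shear u x)) atTop := by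
        refine le_liminf_of_le (by isBoundedDefault) ?_
        filter_upwards [eventually_ge_atTop n] with k hk
        obtain ⟨j, rfl⟩ := Nat.exists_eq_add_of_le hk
        rw [tsub_le_iff_right]
        refine (hstep u n j).trans ?_
        gcongr
        exact ENNReal.sum_le_tsum _
      rw [hu] at this
      exact tsub_eq_zero_iff_le.1 (nonpos_iff_eq_zero.1 this)
    have hint : ∀ n ≥ N, ∫⁻ u, lineDensity μ (σ n) (u, shear u x) ∂slopeMeasure m ≤
        (1 / 2) ^ n * 2 := by
      intro n hn
      calc _ ≤ ∫⁻ u, ∑' i, h (n + i) (u, shear u x) ∂slopeMeasure m := lintegral_mono_ae (hle n)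
        _ = ∑' i, ∫⁻ u, h (n + i) (u, shear u x) ∂slopeMeasure m :=
          lintegral_tsum fun i => ((hm _).comp (by fun_prop)).aemeasurable
        _ ≤ ∑' i, (1 / 2) ^ (n + i) := ENNReal.tsum_le_tsum fun i => hN _ (by omega)
        _ = _ := by
          simp_rw [pow_add]
          rw [ENNReal.tsum_mul_left, ENNReal.tsum_geometric]; simp
    have hlim : Tendsto (fun k : ℕ => (1 / 2 : ℝ≥0∞) ^ k * 2) atTop (𝓝 (0 * 2)) :=
      ENNReal.Tendsto.mul_const (ENNReal.tendsto_pow_atTop_nhds_zero_of_lt_one (by simp))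
        (Or.inr (by simp))
    rw [zero_mul] at hlim
    have hzero : liminf (fun n => ∫⁻ u, lineDensity μ (σ n) (u, shear u x) ∂slopeMeasure m) atTop
        = 0 := by
      rw [← nonpos_iff_eq_zero, ← hlim.liminf_eq]
      refine liminf_le_liminf ?_
      filter_upwards [eventually_ge_atTop N] with n hn using hint n hn
    have hpos := lintegral_lineKernel_pos hplane hμ0 x
    refine absurd hzero (ne_of_gt (lt_of_lt_of_le hpos ?_))
    simp_rw [lintegral_lineDensity_shear]
    have hy : ∀ᵐ y ∂μ, y.2 ≠ x.2 := by rw [ae_iff]; simpa using hplane x.2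
    refine le_trans (lintegral_mono_ae ?_) (lintegral_liminf_le fun n => ?_)
    · filter_upwards [hy] with y hy
      refine le_of_eq (Tendsto.liminf_eq ?_).symm
      refine tendsto_lintegral_comp_shear (Ψ := fun k => mollifier (σ k))
        (fun k => measurable_mollifier _) (fun k => lintegral_mollifier m _)
        (r := fun k => (1 / 2) ^ σ k) (fun k v hv => mollifier_eq_zero hv) ?_ (sub_ne_zero.2 hy)
      exact (tendsto_pow_atTop_nhds_zero_of_lt_one (by norm_num) (by norm_num)).comp
        hσ.tendsto_atTop
    · exact Measurable.lintegral_prod_right (f := fun (y : (Fin m → ℝ) × ℝ) u =>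
          mollifier (σ n) (shear u (y - x))) (by fun_prop)

/-- The mollified energy of a measure along lines. -/
noncomputable def lineEnergy {m : ℕ} (μ : Measure ((Fin m → ℝ) × ℝ)) (τ : ℝ) (k : ℕ)
    (z : (Fin m → ℝ) × (Fin m → ℝ)) : ℝ≥0∞ :=
  ∫⁻ p, mollifier k (shear z.1 p.1 - z.2) * mollifier k (shear z.1 p.2 - z.2) *
    ‖p.1 - p.2‖ₑ ^ (-τ) ∂μ.prod μ

lemma exists_ae_liminf_lineEnergy_ne_top {m : ℕ} {s τ : ℝ} (hτ : 0 < τ) (hs : m + τ < s)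
    {μ : Measure ((Fin m → ℝ) × ℝ)} [IsFiniteMeasure μ] {C : ℝ≥0∞} (hC : C ≠ ∞)
    (hμ : ∀ y r, 0 < r → μ (closedBall y r) ≤ C * ENNReal.ofReal r ^ s) (σ : ℕ → ℕ) :
    ∃ B : Set ((Fin m → ℝ) × ℝ), (∀ t : ℝ, (m : ℝ) < t → μH[t] B = 0) ∧
      ∀ x ∉ B, ∀ᵐ u ∂slopeMeasure m,
        liminf (fun k => lineEnergy μ τ (σ k) (u, shear u x)) atTop ≠ ∞ := by
  have hmeas : ∀ k, Measurable (lineEnergy μ τ k) := by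
    intro k
    exact Measurable.lintegral_prod_right (f := fun (z : (Fin m → ℝ) × (Fin m → ℝ))
      (p : ((Fin m → ℝ) × ℝ) × ((Fin m → ℝ) × ℝ)) =>
      mollifier k (shear z.1 p.1 - z.2) * mollifier k (shear z.1 p.2 - z.2) *
        ‖p.1 - p.2‖ₑ ^ (-τ)) (by fun_prop)
  set M := 2 * 2 ^ m * shearConst m * ∫⁻ p, ‖p.1 - p.2‖ₑ ^ (-(m + τ)) ∂μ.prod μ with hM
  have hMt : M ≠ ∞ := ENNReal.mul_ne_top
    (ENNReal.mul_ne_top (by finiteness) (shearConst_ne_top m))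
    (lintegral_enorm_sub_rpow_ne_top (by positivity) hs hC hμ)
  have hle : ∀ k, ∫⁻ z, lineEnergy μ τ k z ∂(slopeMeasure m).prod volume ≤ M := by
    intro k
    unfold lineEnergy
    rw [lintegral_pair μ k k (G := fun p => ‖p.1 - p.2‖ₑ ^ (-τ)) (by fun_prop), hM,
      ← lintegral_const_mul _ (by fun_prop)]
    refine lintegral_mono fun p => ?_
    calc _ ≤ 2 * 2 ^ m * shearConst m * ‖p.1 - p.2‖ₑ ^ (-(m : ℝ)) * ‖p.1 - p.2‖ₑ ^ (-τ) := by
          gcongr; exact lintegral_corr_shear_le _ _ _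
      _ ≤ _ := by
          rw [mul_assoc]
          gcongr
          rcases eq_or_ne ‖p.1 - p.2‖ₑ 0 with h0 | h0
          · rw [h0, ENNReal.zero_rpow_of_neg (y := -(m + τ)) (by
              have := m.cast_nonneg (α := ℝ); linarith)]
            exact le_top
          · rw [← ENNReal.rpow_add _ _ h0 (by simp), neg_add]
  have hnull : (slopeMeasure m).prod volume
      {z | liminf (fun k => lineEnergy μ τ (σ k) z) atTop = ∞} = 0 := by
    have hmz : Measurable fun z => liminf (fun k => lineEnergy μ τ (σ k) z) atTop :=
      Measurable.liminf fun k => hmeas _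
    have := ae_lt_top hmz (μ := (slopeMeasure m).prod volume) (ne_top_of_le_ne_top hMt
      ((lintegral_liminf_le fun k => hmeas (σ k)).trans
        (liminf_le_of_le (by isBoundedDefault) fun b hb => by
          obtain ⟨k, hk⟩ := hb.exists
          exact hk.trans (hle _))))
    rw [ae_iff] at this
    simpa using this
  refine ⟨{x | ¬ ∀ᵐ u ∂slopeMeasure m, (u, shear u x) ∉
    {z | liminf (fun k => lineEnergy μ τ (σ k) z) atTop = ∞}}, fun t ht =>
    hausdorffMeasure_not_ae_notMem_eq_zero ht hnull, fun x hx => ?_⟩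
  simpa only [mem_ofPred_eq, not_not] using hx

lemma exists_eball_cover_of_hausdorffMeasure_eq_zero {X : Type*} [MetricSpace X]
    [MeasurableSpace X] [BorelSpace X] [Nonempty X] {τ : ℝ} (hτ : 0 < τ) {S : Set X}
    (hS : μH[τ] S = 0) {η : ℝ≥0∞} (hη : η ≠ 0) :
    ∃ (c : ℕ → X) (d : ℕ → ℝ≥0∞), S ⊆ ⋃ i, Metric.eball (c i) (d i) ∧ (∀ i, d i ≠ 0) ∧
      (∀ i, d i ≠ ∞) ∧ ∑' i, d i ^ τ ≤ η := by
  obtain ⟨ε, hε0, hε⟩ := ENNReal.exists_pos_sum_of_countable (ENNReal.half_pos hη).ne' ℕ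
  obtain ⟨T, hT, hT1, hTs⟩ : ∃ T : ℕ → Set X, S ⊆ ⋃ i, T i ∧ (∀ i, ediam (T i) ≤ 1) ∧
      ∑' i, ediam (T i) ^ τ < η / 2 := by
    rw [Measure.hausdorffMeasure_apply] at hS
    have h := lt_of_le_of_lt (le_iSup₂_of_le (f := fun (r : ℝ≥0∞) (_ : 0 < r) =>
      ⨅ (t : ℕ → Set X) (_ : S ⊆ ⋃ n, t n) (_ : ∀ n, ediam (t n) ≤ r),
          ∑' n, ⨆ _ : (t n).Nonempty, ediam (t n) ^ τ) 1 one_pos le_rfl)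
      (hS.trans_lt (ENNReal.half_pos hη))
    simp only [iInf_lt_iff] at h
    obtain ⟨T, hT, hT1, hlt⟩ := h
    refine ⟨T, hT, hT1, lt_of_le_of_lt (ENNReal.tsum_le_tsum fun i => ?_) hlt⟩
    rcases (T i).eq_empty_or_nonempty with h | h
    · simp [h, hτ]
    · simp [h]
  have hd : ∀ i, ∃ d : ℝ≥0∞, ediam (T i) < d ∧ d ≠ ∞ ∧ d ^ τ ≤ ediam (T i) ^ τ + ε i := by
    intro i
    have hfin : ediam (T i) < ∞ := (hT1 i).trans_lt (by simp)
    have hlt : ediam (T i) ^ τ < ediam (T i) ^ τ + ε i :=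
      ENNReal.lt_add_right (ENNReal.rpow_ne_top_of_nonneg hτ.le hfin.ne)
        (by simpa using (hε0 i).ne')
    have hev : ∀ᶠ d in 𝓝 (ediam (T i)), d ^ τ < ediam (T i) ^ τ + ε i :=
      ((ENNReal.continuous_rpow_const (y := τ)).tendsto _).eventually_lt_const hlt
    have : (𝓝[>] ediam (T i)).NeBot := nhdsGT_neBot_of_exists_gt ⟨∞, hfin⟩
    obtain ⟨d, ⟨hd1, hd2⟩, hd3⟩ := (((hev.filter_mono nhdsWithin_le_nhds).and
      ((eventually_lt_nhds hfin).filter_mono nhdsWithin_le_nhds)).and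
      (eventually_mem_nhdsWithin (a := ediam (T i)) (s := Ioi (ediam (T i))))).exists
    exact ⟨d, hd3, hd2.ne, hd1.le⟩
  choose d hd1 hd2 hd3 using hd
  have hc : ∀ i, ∃ c, T i ⊆ Metric.eball c (d i) := by
    intro i
    rcases (T i).eq_empty_or_nonempty with h | ⟨c, hc⟩
    · exact ⟨Classical.arbitrary X, by simp [h]⟩
    · exact ⟨c, fun y hy => (edist_le_ediam_of_mem hy hc).trans_lt (hd1 i)⟩
  choose c hc using hc
  refine ⟨c, d, hT.trans (iUnion_mono hc), fun i => (bot_le.trans_lt (hd1 i)).ne', hd2, ?_⟩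
  calc ∑' i, d i ^ τ ≤ ∑' i, (ediam (T i) ^ τ + ε i) := ENNReal.tsum_le_tsum hd3
    _ = ∑' i, ediam (T i) ^ τ + ∑' i, (ε i : ℝ≥0∞) := ENNReal.tsum_add
    _ ≤ η / 2 + η / 2 := add_le_add hTs.le hε.le
    _ = η := ENNReal.add_halves η

/-- A measure of finite energy cannot be concentrated on sets with small total weight. -/
lemma setLIntegral_iUnion_le_energy {α : Type*} [MeasurableSpace α] {μ : Measure α} [SFinite μ]
    {f : α → ℝ≥0∞} (hf : Measurable f) {G : α × α → ℝ≥0∞} (hG : Measurable G)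
    {D : ℕ → Set α} (hD : ∀ i, MeasurableSet (D i)) (hdisj : Pairwise (Function.onFun Disjoint D))
    {w : ℕ → ℝ≥0∞} (hw0 : ∀ i, w i ≠ 0) (hwt : ∀ i, w i ≠ ∞)
    (hw : ∀ i, ∀ p ∈ D i ×ˢ D i, 1 ≤ w i * G p) {M : ℝ≥0∞} (hM0 : M ≠ 0) (hMt : M ≠ ∞) :
    ∫⁻ y in ⋃ i, D i, f y ∂μ ≤
      M * ∑' i, w i + (∫⁻ p, f p.1 * f p.2 * G p ∂μ.prod μ) / M := by
  set E : ℕ → ℝ≥0∞ := fun i => ∫⁻ p in D i ×ˢ D i, f p.1 * f p.2 * G p ∂μ.prod μ with hE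
  have hEs : ∑' i, E i ≤ ∫⁻ p, f p.1 * f p.2 * G p ∂μ.prod μ := by
    rw [hE, ← lintegral_iUnion (fun i => (hD i).prod (hD i))]
    · exact setLIntegral_le_lintegral _ _
    · intro i j hij
      exact Disjoint.set_prod_left (hdisj hij) _ _
  have hterm : ∀ i, ∫⁻ y in D i, f y ∂μ ≤ M * w i + E i / M := by
    intro i
    set a := ∫⁻ y in D i, f y ∂μ with ha
    have hc0 : M * w i ≠ 0 := mul_ne_zero hM0 (hw0 i)
    have hct : M * w i ≠ ∞ := ENNReal.mul_ne_top hMt (hwt i)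
    have haa : a * a ≤ w i * E i := by
      rw [ha, ← lintegral_prod_mul hf.aemeasurable hf.aemeasurable, Measure.prod_restrict, hE,
        ← lintegral_const_mul _ (by fun_prop)]
      refine setLIntegral_mono (by fun_prop) fun p hp => ?_
      calc f p.1 * f p.2 = f p.1 * f p.2 * 1 := (mul_one _).symm
        _ ≤ f p.1 * f p.2 * (w i * G p) := by gcongr; exact hw i p hp
        _ = _ := by ring
    rcases le_total a (M * w i) with h | h
    · exact h.trans le_self_add
    · refine le_trans ?_ le_add_self
      calc a ≤ a * a / (M * w i) := by
            rw [ENNReal.le_div_iff_mul_le (Or.inl hc0) (Or.inl hct)]; gcongr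
        _ ≤ w i * E i / (M * w i) := by gcongr
        _ = E i / M := by
            rw [mul_comm M]; exact ENNReal.mul_div_mul_left _ _ (hw0 i) (hwt i)
  calc ∫⁻ y in ⋃ i, D i, f y ∂μ = ∑' i, ∫⁻ y in D i, f y ∂μ := lintegral_iUnion hD hdisj _
    _ ≤ ∑' i, (M * w i + E i / M) := ENNReal.tsum_le_tsum hterm
    _ = M * ∑' i, w i + (∑' i, E i) / M := by
        rw [ENNReal.tsum_add, ENNReal.tsum_mul_left]
        simp only [div_eq_mul_inv, ENNReal.tsum_mul_right]
    _ ≤ _ := by gcongr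

/-- If the mollified densities along a line stay away from zero while the mollified energies stay
bounded along a subsequence, then the line section has large dimension. -/
lemma le_dimH_section {m : ℕ} {τ : ℝ} (hτ : 0 < τ) {K : Set ((Fin m → ℝ) × ℝ)} (hK : IsCompact K)
    {μ : Measure ((Fin m → ℝ) × ℝ)} [IsFiniteMeasure μ] (hμK : μ Kᶜ = 0) {σ : ℕ → ℕ}
    (hσ : StrictMono σ) {u v : Fin m → ℝ}
    (h1 : liminf (fun k => lineDensity μ (σ k) (u, v)) atTop ≠ 0)
    (h2 : liminf (fun k => lineEnergy μ τ (σ k) (u, v)) atTop ≠ ∞) :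
    ENNReal.ofReal τ ≤ dimH (K ∩ {y | shear u y = v}) := by
  by_contra! hdim
  have hnull : μH[τ] (K ∩ {y | shear u y = v}) = 0 := by
    have := hausdorffMeasure_of_dimH_lt (d := τ.toNNReal) hdim
    rwa [Real.coe_toNNReal _ hτ.le] at this
  obtain ⟨g, hg0, hg⟩ := exists_between (pos_iff_ne_zero.2 h1)
  have hgt : g ≠ ∞ := hg.ne_top
  obtain ⟨J, hJ, hJt⟩ := exists_between (lt_top_iff_ne_top.2 h2)
  have hJ0 : J ≠ 0 := (bot_le.trans_lt hJ).ne'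
  set M := 2 * J / g with hM
  have hM0 : M ≠ 0 := ENNReal.div_ne_zero.2 ⟨by simp [hJ0], hgt⟩
  have hMt : M ≠ ∞ := ENNReal.div_ne_top (by finiteness) hg0.ne'
  have h2τ0 : (2 : ℝ≥0∞) ^ τ ≠ 0 := by simp
  have h2τt : (2 : ℝ≥0∞) ^ τ ≠ ∞ := by simp
  obtain ⟨c, d, hcov, hd0, hdt, hds⟩ := exists_eball_cover_of_hausdorffMeasure_eq_zero hτ hnull
    (η := g / 2 / (M * 2 ^ τ)) (ENNReal.div_ne_zero.2 ⟨(ENNReal.half_pos hg0.ne').ne',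
      ENNReal.mul_ne_top hMt h2τt⟩)
  set U := ⋃ i, Metric.eball (c i) (d i) with hU
  have hUo : IsOpen U := isOpen_iUnion fun i => isOpen_eball
  have hfar : ∀ᶠ k in atTop, ∀ y ∈ K \ U, mollifier (σ k) (shear u y - v) = 0 := by
    have hKU : IsCompact (K \ U) := hK.diff hUo
    rcases (K \ U).eq_empty_or_nonempty with h | hne
    · simp [h]
    obtain ⟨y₀, hy₀, hmin⟩ := hKU.exists_isMinOn hne
      (f := fun y => ‖shear u y - v‖) (by fun_prop)
    have hpos : 0 < ‖shear u y₀ - v‖ := by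
      rw [norm_pos_iff, sub_ne_zero]
      exact fun h => hy₀.2 (hcov ⟨hy₀.1, h⟩)
    have hlim : Tendsto (fun k => (1 / 2 : ℝ) ^ σ k) atTop (𝓝 0) :=
      (tendsto_pow_atTop_nhds_zero_of_lt_one (by norm_num) (by norm_num)).comp hσ.tendsto_atTop
    filter_upwards [hlim.eventually_lt_const hpos] with k hk y hy
    exact mollifier_eq_zero (hk.trans_le (hmin hy))
  obtain ⟨k, hkJ, hkg, hkU⟩ := ((frequently_lt_of_liminf_lt (by isBoundedDefault) hJ).and_eventually
    ((eventually_lt_of_lt_liminf hg).and hfar)).exists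
  have hD : ⋃ i, disjointed (fun i => Metric.eball (c i) (d i)) i = U := iUnion_disjointed
  have hne : ∀ i, (2 * d i) ^ τ ≠ 0 := fun i =>
    (ENNReal.rpow_pos (pos_iff_ne_zero.2 (mul_ne_zero two_ne_zero (hd0 i)))
      (ENNReal.mul_ne_top (by simp) (hdt i))).ne'
  have hnt : ∀ i, (2 * d i) ^ τ ≠ ∞ := fun i =>
    ENNReal.rpow_ne_top_of_nonneg hτ.le (ENNReal.mul_ne_top (by simp) (hdt i))
  have hle := setLIntegral_iUnion_le_energy (μ := μ) (f := fun y => mollifier (σ k) (shear u y - v))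
    (by fun_prop) (G := fun p => ‖p.1 - p.2‖ₑ ^ (-τ)) (by fun_prop)
    (D := disjointed fun i => Metric.eball (c i) (d i))
    (fun i => MeasurableSet.disjointed (fun i => isOpen_eball.measurableSet) i)
    (disjoint_disjointed _) (w := fun i => (2 * d i) ^ τ)
    hne hnt
    (by
      rintro i ⟨p, q⟩ ⟨hp, hq⟩
      have hp := disjointed_subset _ i hp
      have hq := disjointed_subset _ i hq
      have hpq : ‖p - q‖ₑ ≤ 2 * d i := by
        rw [← edist_eq_enorm_sub]
        refine (edist_triangle_right p q (c i)).trans ?_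
        rw [two_mul]
        exact add_le_add (le_of_lt hp) (le_of_lt hq)
      rw [ENNReal.rpow_neg, ← div_eq_mul_inv]
      simp only
      rw [ENNReal.le_div_iff_mul_le (Or.inr (hne i)) (Or.inr (hnt i)), one_mul]
      gcongr) hM0 hMt
  rw [hD] at hle
  have hlhs : lineDensity μ (σ k) (u, v) = ∫⁻ y in U, mollifier (σ k) (shear u y - v) ∂μ := by
    rw [lineDensity, ← lintegral_indicator hUo.measurableSet]
    refine lintegral_congr_ae ?_
    have : ∀ᵐ y ∂μ, y ∈ K := by rw [ae_iff]; exact hμK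
    filter_upwards [this] with y hy
    by_cases hyU : y ∈ U
    · simp [hyU]
    · simpa [hyU] using hkU y ⟨hy, hyU⟩
  refine absurd hkg (not_lt.2 ?_)
  rw [hlhs]
  refine hle.trans ?_
  calc _ ≤ M * (2 ^ τ * (g / 2 / (M * 2 ^ τ))) + J / M := by
        gcongr
        · simp_rw [ENNReal.mul_rpow_of_nonneg _ _ hτ.le]
          rw [ENNReal.tsum_mul_left]
          gcongr
        · exact hkJ.le
    _ = g / 2 + g / 2 := by
        congr 1
        · rw [← mul_assoc]
          exact ENNReal.mul_div_cancel (mul_ne_zero hM0 h2τ0) (ENNReal.mul_ne_top hMt h2τt)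
        · rw [hM, div_eq_mul_inv, ENNReal.inv_div (Or.inl hgt) (Or.inl hg0.ne'), ← mul_div_assoc,
            mul_comm 2 J, ENNReal.mul_div_mul_left _ _ hJ0 hJt.ne]
    _ = g := ENNReal.add_halves g

/-- Almost every fibre of a Lipschitz map to `ℝᵐ` drops the dimension of null sets by `m`. -/
lemma ae_hausdorffMeasure_fiber_eq_zero {X : Type*} [MetricSpace X] [MeasurableSpace X]
    [BorelSpace X] {m : ℕ} {t : ℝ} (ht : 0 < t) {S : Set X} (hS : μH[m + t] S = 0)
    {f : X → Fin m → ℝ} {L : ℝ≥0} (hf : LipschitzOnWith L f S) :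
    ∀ᵐ u : Fin m → ℝ, μH[t] (S ∩ {y | f y = u}) = 0 := by
  rcases isEmpty_or_nonempty X with hX | hX
  · refine Eventually.of_forall fun u => ?_
    rw [Set.eq_empty_of_isEmpty (S ∩ {y | f y = u}), measure_empty]
  have hmt : 0 < (m : ℝ) + t := by positivity
  choose c d hcov hd0 hdt hds using fun k : ℕ => exists_eball_cover_of_hausdorffMeasure_eq_zero
    hmt hS (η := (1 / 2) ^ k) (by simp)
  set F : ℕ → ℕ → Set (Fin m → ℝ) := fun k i =>
    closure (f '' (Metric.eball (c k i) (d k i) ∩ S)) with hF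
  set h : ℕ → (Fin m → ℝ) → ℝ≥0∞ := fun k u =>
    ∑' i, (F k i).indicator (fun _ => (2 * d k i) ^ t) u with hh
  have hFm : ∀ k i, MeasurableSet (F k i) := fun k i => isClosed_closure.measurableSet
  have hm : ∀ k, Measurable (h k) := fun k =>
    Measurable.tsum fun i => measurable_const.indicator (hFm k i)
  have hvol : ∀ k i, volume (F k i) ≤ (L * (2 * d k i)) ^ m := by
    intro k i
    refine (Real.volume_pi_le_diam_pow _).trans ?_
    rw [Fintype.card_fin, hF, ediam_closure]
    gcongr
    refine ediam_image_le_iff.2 ?_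
    intro y hy z hz
    refine (hf hy.2 hz.2).trans ?_
    gcongr
    refine (edist_triangle_right y z (c k i)).trans ?_
    rw [two_mul]
    exact add_le_add (le_of_lt hy.1) (le_of_lt hz.1)
  have hint : ∀ k, ∫⁻ u, h k u ≤ L ^ m * 2 ^ (m + t) * (1 / 2) ^ k := by
    intro k
    simp only [hh]
    rw [lintegral_tsum fun i => (measurable_const.indicator (hFm k i)).aemeasurable]
    calc _ ≤ ∑' i, L ^ m * 2 ^ (m + t) * d k i ^ (m + t) := by
          refine ENNReal.tsum_le_tsum fun i => ?_
          rw [lintegral_indicator_const (hFm k i)]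
          calc _ ≤ (2 * d k i) ^ t * (L * (2 * d k i)) ^ m := by gcongr; exact hvol k i
            _ = L ^ m * ((2 * d k i) ^ (m : ℝ) * (2 * d k i) ^ t) := by
                rw [mul_pow, ENNReal.rpow_natCast]; ring
            _ = _ := by
                rw [← ENNReal.rpow_add_of_nonneg _ _ (by positivity) ht.le,
                  ENNReal.mul_rpow_of_nonneg _ _ hmt.le]; ring
      _ ≤ _ := by rw [ENNReal.tsum_mul_left]; gcongr; exact hds k
  have hsum : ∫⁻ u, ∑' k, h k u ≠ ∞ := by
    rw [lintegral_tsum fun k => (hm k).aemeasurable]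
    refine ne_top_of_le_ne_top ?_ (ENNReal.tsum_le_tsum hint)
    rw [ENNReal.tsum_mul_left, ENNReal.tsum_geometric]
    have : (2 : ℝ≥0∞) ^ (m + t) ≠ ∞ := ENNReal.rpow_ne_top_of_nonneg hmt.le (by simp)
    refine ENNReal.mul_ne_top (by finiteness) ?_
    simp
  filter_upwards [ae_lt_top (Measurable.tsum hm) hsum] with u hu
  have hlim : Tendsto (fun k => h k u) atTop (𝓝 0) :=
    ENNReal.tendsto_atTop_zero_of_tsum_ne_top hu.ne
  have hr : Tendsto (fun k : ℕ => 2 * ((1 / 2 : ℝ≥0∞) ^ k) ^ (1 / (m + t))) atTop (𝓝 0) := by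
    have h1 : Tendsto (fun k : ℕ => (1 / 2 : ℝ≥0∞) ^ k) atTop (𝓝 0) :=
      ENNReal.tendsto_pow_atTop_nhds_zero_of_lt_one (by simp)
    have h2 := ((ENNReal.continuous_rpow_const (y := 1 / (m + t))).tendsto 0).comp h1
    have h3 := ENNReal.Tendsto.const_mul (a := 2) h2 (Or.inr (by simp))
    rwa [ENNReal.zero_rpow_of_pos (by positivity), mul_zero] at h3
  have hdiam : ∀ k i, ediam (Metric.eball (c k i) (d k i) ∩ (S ∩ {y | f y = u})) ≤ 2 * d k i :=
    fun k i => (ediam_mono inter_subset_left).trans ediam_eball_le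
  have hle := Measure.hausdorffMeasure_le_liminf_tsum t (S ∩ {y | f y = u}) _ hr
    (fun k i => Metric.eball (c k i) (d k i) ∩ (S ∩ {y | f y = u}))
    (Eventually.of_forall fun k i => by
      refine (hdiam k i).trans ?_
      gcongr
      have : d k i ^ (m + t) ≤ (1 / 2) ^ k := (ENNReal.le_tsum i).trans (hds k)
      calc d k i = (d k i ^ (m + t)) ^ (1 / (m + t)) := by
            rw [← ENNReal.rpow_mul, mul_one_div_cancel hmt.ne', ENNReal.rpow_one]
        _ ≤ _ := by gcongr)
    (Eventually.of_forall fun k y hy => by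
      obtain ⟨i, hi⟩ := mem_iUnion.1 (hcov k hy.1)
      exact mem_iUnion.2 ⟨i, hi, hy⟩)
  refine nonpos_iff_eq_zero.1 (hle.trans ?_)
  rw [← hlim.liminf_eq]
  refine liminf_le_liminf (Eventually.of_forall fun k => ENNReal.tsum_le_tsum fun i => ?_)
  rcases (Metric.eball (c k i) (d k i) ∩ (S ∩ {y | f y = u})).eq_empty_or_nonempty with h | ⟨y, hy⟩
  · simp [h, ht]
  · rw [indicator_of_mem]
    · gcongr; exact hdiam k i
    · exact subset_closure ⟨y, ⟨hy.1, hy.2.1⟩, hy.2.2⟩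

lemma ae_hausdorffMeasure_section_eq_zero {m : ℕ} {t : ℝ} (ht : 0 < t)
    {A : Set ((Fin m → ℝ) × ℝ)} (hA : μH[m + t] A = 0) (x : (Fin m → ℝ) × ℝ) :
    ∀ᵐ u : Fin m → ℝ, μH[t] (A ∩ {y | shear u y = shear u x}) = 0 := by
  set f : (Fin m → ℝ) × ℝ → Fin m → ℝ := fun y => (y.2 - x.2)⁻¹ • (y.1 - x.1) with hf
  have hloc : ∀ y : (Fin m → ℝ) × ℝ, ∃ V ∈ 𝓝 y, y.2 ≠ x.2 → ∃ L, LipschitzOnWith L f V := by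
    intro y
    by_cases hy : y.2 = x.2
    · exact ⟨univ, univ_mem, fun h => absurd hy h⟩
    · have : ContDiffAt ℝ 1 f y :=
        ((contDiff_snd.sub contDiff_const).contDiffAt.inv (sub_ne_zero.2 hy)).smul
          (contDiff_fst.sub contDiff_const).contDiffAt
      obtain ⟨L, V, hV, hL⟩ := this.exists_lipschitzOnWith
      exact ⟨V, hV, fun _ => ⟨L, hL⟩⟩
  choose V hV hL using hloc
  obtain ⟨T, hTW, hTc, hT⟩ := TopologicalSpace.countable_cover_nhdsWithin
    (s := {y : (Fin m → ℝ) × ℝ | y.2 ≠ x.2}) (f := V) fun y _ => mem_nhdsWithin_of_mem_nhds (hV y)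
  have hae : ∀ᵐ u : Fin m → ℝ, ∀ y ∈ T, μH[t] ((A ∩ V y) ∩ {y | f y = u}) = 0 := by
    rw [ae_ball_iff hTc]
    intro y hy
    obtain ⟨L, hL⟩ := hL y (hTW hy)
    exact ae_hausdorffMeasure_fiber_eq_zero ht (measure_mono_null inter_subset_left hA)
      (hL.mono inter_subset_right)
  filter_upwards [hae] with u hu
  have := Measure.nullSingletonClass_hausdorff ((Fin m → ℝ) × ℝ) ht
  refine measure_mono_null (t := {x} ∪ ⋃ y ∈ T, (A ∩ V y) ∩ {y | f y = u}) ?_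
    (measure_union_null (measure_singleton _) ((measure_biUnion_null_iff hTc).2 hu))
  rintro y ⟨hyA, hy⟩
  have hy : y.1 - y.2 • u = x.1 - x.2 • u := hy
  by_cases hyx : y.2 = x.2
  · left
    rw [hyx, sub_left_inj] at hy
    exact Prod.ext hy hyx
  · right
    obtain ⟨z, hz, hyz⟩ := mem_iUnion₂.1 (hT hyx)
    refine mem_iUnion₂.2 ⟨z, hz, ⟨hyA, hyz⟩, ?_⟩
    have : y.1 - x.1 = (y.2 - x.2) • u := by
      rw [sub_smul, sub_eq_sub_iff_sub_eq_sub]; exact hy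
    simp only [hf, mem_ofPred_eq, this]
    rw [inv_smul_smul₀ (sub_ne_zero.2 hyx)]

lemma ae_dimH_section_le {m : ℕ} {s : ℝ} (hs : (m : ℝ) < s) {A : Set ((Fin m → ℝ) × ℝ)}
    (hA : μH[s] A ≠ ∞) (x : (Fin m → ℝ) × ℝ) :
    ∀ᵐ u : Fin m → ℝ, dimH (A ∩ {y | shear u y = shear u x}) ≤ ENNReal.ofReal (s - m) := by
  have h : ∀ i : ℕ, ∀ᵐ u : Fin m → ℝ,
      μH[s - m + 1 / (i + 1)] (A ∩ {y | shear u y = shear u x}) = 0 := by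
    intro i
    have hi : (0 : ℝ) < 1 / (i + 1) := by positivity
    refine ae_hausdorffMeasure_section_eq_zero (by linarith) ?_ x
    rcases Measure.hausdorffMeasure_zero_or_top (show s < m + (s - m + 1 / ((i : ℝ) + 1)) by linarith)
      A with h | h
    · exact h
    · exact absurd h hA
  filter_upwards [ae_all_iff.2 h] with u hu
  have hlim : Tendsto (fun i : ℕ => ENNReal.ofReal (s - m + 1 / ((i : ℝ) + 1))) atTop
      (𝓝 (ENNReal.ofReal (s - m))) := by
    refine ENNReal.tendsto_ofReal ?_
    simpa using tendsto_one_div_add_atTop_nhds_zero_nat.const_add (s - m)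
  refine ge_of_tendsto' hlim fun i => ?_
  have hpos : 0 ≤ s - m + 1 / ((i : ℝ) + 1) := by
    have : (0 : ℝ) < 1 / (i + 1) := by positivity
    linarith
  refine dimH_le_of_hausdorffMeasure_ne_top (d := (s - m + 1 / ((i : ℝ) + 1)).toNNReal) ?_
  rw [Real.coe_toNNReal _ hpos, hu i]
  simp

lemma hausdorffMeasure_setOf_snd_eq {m : ℕ} {s : ℝ} (hs : (m : ℝ) < s) (b : ℝ) :
    μH[s] {y : (Fin m → ℝ) × ℝ | y.2 = b} = 0 := by
  have hs0 : 0 ≤ s := m.cast_nonneg.trans hs.le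
  have himg : {y : (Fin m → ℝ) × ℝ | y.2 = b} = (fun v => (v, b)) '' univ := by
    ext ⟨v, r⟩
    simp [eq_comm]
  have hlip : LipschitzWith 1 fun v : Fin m → ℝ => (v, b) :=
    LipschitzWith.prodMk_right b
  have hdim : dimH {y : (Fin m → ℝ) × ℝ | y.2 = b} < (s.toNNReal : ℝ≥0∞) := by
    rw [himg]
    refine (hlip.dimH_image_le _).trans_lt ?_
    rw [Real.dimH_univ_pi_fin]
    have : (m : ℝ≥0) < s.toNNReal := by
      rw [Real.lt_toNNReal_iff_coe_lt]; simpa using hs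
    exact_mod_cast this
  have := hausdorffMeasure_of_dimH_lt hdim
  rwa [Real.coe_toNNReal _ hs0] at this

/-- The slicing theorem in shear coordinates. -/
theorem exists_hausdorffMeasure_eq_zero_volume_section_ne_zero {m : ℕ} {s : ℝ} (hs : (m : ℝ) < s)
    {A : Set ((Fin m → ℝ) × ℝ)} (hA : MeasurableSet A) (h0 : 0 < μH[s] A) (h1 : μH[s] A < ∞) :
    ∃ B : Set ((Fin m → ℝ) × ℝ), (∀ t : ℝ, (m : ℝ) < t → μH[t] B = 0) ∧ ∀ x ∉ B,
      volume {u | dimH (A ∩ {y | shear u y = shear u x}) = ENNReal.ofReal (s - m)} ≠ 0 := by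
  have hs0 : 0 < s := m.cast_nonneg.trans_lt hs
  obtain ⟨K, hKA, hK, hK0, C, hC, hfro⟩ := exists_isCompact_frostman hs0 A hA h0 h1
  set μ := (μH[s] : Measure ((Fin m → ℝ) × ℝ)).restrict K with hμ
  have hfin : IsFiniteMeasure μ := ⟨by
    rw [hμ, Measure.restrict_apply_univ]; exact (measure_mono hKA).trans_lt h1⟩
  have hμ0 : μ ≠ 0 := by
    rw [hμ, Ne, Measure.restrict_eq_zero]; exact hK0.ne'
  have hμK : μ Kᶜ = 0 := by
    rw [hμ, Measure.restrict_apply hK.measurableSet.compl]; simp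
  have hball : ∀ y r, 0 < r → μ (closedBall y r) ≤ C * ENNReal.ofReal r ^ s := by
    intro y r hr
    rw [hμ, Measure.restrict_apply measurableSet_closedBall, inter_comm]
    exact hfro y r hr
  have hplane : ∀ b, μ {y | y.2 = b} = 0 := fun b =>
    Measure.absolutelyContinuous_of_le Measure.restrict_le_self (hausdorffMeasure_setOf_snd_eq hs b)
  obtain ⟨σ, hσ, B₀, hB₀, hx₀⟩ := exists_subseq_not_ae_liminf_eq_zero hs hμ0 hC hball hplane
  obtain ⟨τ, -, hτ, hτlim⟩ := exists_seq_strictMono_tendsto' (sub_pos.2 hs)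
  choose B hB hx using fun i => exists_ae_liminf_lineEnergy_ne_top (hτ i).1
    (by linarith [(hτ i).2]) hC hball σ
  refine ⟨B₀ ∪ ⋃ i, B i, fun t ht => measure_union_null (hB₀ t ht)
    (measure_iUnion_null fun i => hB i t ht), fun x hxB hnull => ?_⟩
  simp only [mem_union, mem_iUnion, not_or, not_exists] at hxB
  refine hx₀ x hxB.1 ?_
  have hne : ∀ᵐ u ∂slopeMeasure m,
      dimH (A ∩ {y | shear u y = shear u x}) ≠ ENNReal.ofReal (s - m) := by
    rw [ae_slopeMeasure_iff, ae_iff]; simpa using hnull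
  have hle := ae_slopeMeasure_iff.2 (ae_dimH_section_le hs h1.ne x)
  filter_upwards [hne, hle, ae_all_iff.2 fun i => hx i x (hxB.2 i)] with u hu1 hu2 hu3
  by_contra hlim
  refine hu1 (le_antisymm hu2 ?_)
  refine le_of_tendsto' (ENNReal.tendsto_ofReal hτlim) fun i => ?_
  exact (le_dimH_section (hτ i).1 hK hμK hσ hlim (hu3 i)).trans
    (dimH_mono (inter_subset_inter_left _ hKA))

lemma hausdorffMeasure_image_eq_zero_of_contDiffAt {E F : Type*} [NormedAddCommGroup E]
    [NormedSpace ℝ E] [SecondCountableTopology E] [MeasurableSpace E] [BorelSpace E]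
    [NormedAddCommGroup F] [NormedSpace ℝ F] [MeasurableSpace F] [BorelSpace F]
    {f : E → F} {S : Set E} (hf : ∀ x ∈ S, ContDiffAt ℝ 1 f x) {d : ℝ} (hd : 0 ≤ d)
    (hS : μH[d] S = 0) : μH[d] (f '' S) = 0 := by
  have hloc : ∀ x, ∃ V ∈ 𝓝 x, x ∈ S → ∃ L, LipschitzOnWith L f V := by
    intro x
    by_cases hx : x ∈ S
    · obtain ⟨L, V, hV, hL⟩ := (hf x hx).exists_lipschitzOnWith
      exact ⟨V, hV, fun _ => ⟨L, hL⟩⟩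
    · exact ⟨univ, univ_mem, fun h => absurd h hx⟩
  choose V hV hL using hloc
  obtain ⟨T, hTS, hTc, hT⟩ := TopologicalSpace.countable_cover_nhdsWithin
    (s := S) (f := V) fun x _ => mem_nhdsWithin_of_mem_nhds (hV x)
  refine measure_mono_null (t := ⋃ x ∈ T, f '' (S ∩ V x)) ?_
    ((measure_biUnion_null_iff hTc).2 fun x hx => ?_)
  · rintro _ ⟨y, hy, rfl⟩
    obtain ⟨x, hx, hyx⟩ := mem_iUnion₂.1 (hT hy)
    exact mem_iUnion₂.2 ⟨x, hx, y, ⟨hy, hyx⟩, rfl⟩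
  · obtain ⟨L, hL⟩ := hL x (hTS hx)
    have := (hL.mono (inter_subset_right (s := S))).hausdorffMeasure_image_le hd
    rw [measure_mono_null inter_subset_left hS, mul_zero] at this
    exact nonpos_iff_eq_zero.1 this

lemma exists_measurableSet_superset_dimH_le {X : Type*} [MetricSpace X] [MeasurableSpace X]
    [BorelSpace X] {m : ℕ} {B : Set X} (hB : ∀ t : ℝ, (m : ℝ) < t → μH[t] B = 0) :
    ∃ B' ⊇ B, MeasurableSet B' ∧ dimH B' ≤ m := by
  refine ⟨⋂ i : ℕ, toMeasurable μH[m + 1 / ((i : ℝ) + 1)] B,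
    subset_iInter fun i => subset_toMeasurable _ _,
    MeasurableSet.iInter fun i => measurableSet_toMeasurable _ _, ?_⟩
  have hlim : Tendsto (fun i : ℕ => ENNReal.ofReal (m + 1 / ((i : ℝ) + 1))) atTop
      (𝓝 (ENNReal.ofReal m)) := by
    refine ENNReal.tendsto_ofReal ?_
    simpa using tendsto_one_div_add_atTop_nhds_zero_nat.const_add (m : ℝ)
  rw [ENNReal.ofReal_natCast] at hlim
  refine ge_of_tendsto' hlim fun i => ?_
  have hi : (0 : ℝ) < 1 / (i + 1) := by positivity
  have hnull : μH[m + 1 / ((i : ℝ) + 1)]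
      (⋂ i : ℕ, toMeasurable μH[m + 1 / ((i : ℝ) + 1)] B) = 0 :=
    measure_mono_null (iInter_subset _ i) (by rw [measure_toMeasurable]; exact hB _ (by linarith))
  refine dimH_le_of_hausdorffMeasure_ne_top (d := (m + 1 / ((i : ℝ) + 1)).toNNReal) ?_
  rw [Real.coe_toNNReal _ (by positivity), hnull]
  simp

lemma image_line_eq {E : Type*} [NormedAddCommGroup E] [NormedSpace ℝ E] {m : ℕ}
    (L : E ≃L[ℝ] (Fin m → ℝ) × ℝ) (A : Set E) (x : E) {e : E} {u : Fin m → ℝ} {a : ℝ} (ha : a ≠ 0)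
    (he : L e = a • (u, 1)) :
    L '' (A ∩ {y | ∃ r : ℝ, y = x + r • e}) = L '' A ∩ {y | shear u y = shear u (L x)} := by
  rw [image_inter L.injective]
  congr 1
  ext z
  constructor
  · rintro ⟨_, ⟨r, rfl⟩, rfl⟩
    simp only [map_add, map_smul, he, mem_ofPred_eq, shear, Prod.fst_add, Prod.snd_add,
      Prod.smul_fst, Prod.smul_snd]
    simp only [smul_eq_mul, mul_one, add_smul, mul_smul]
    abel
  · intro hz
    have hz : z.1 - z.2 • u = (L x).1 - (L x).2 • u := hz
    refine ⟨x + ((z.2 - (L x).2) / a) • e, ⟨_, rfl⟩, ?_⟩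
    rw [map_add, map_smul, he, smul_smul, div_mul_cancel₀ _ ha]
    refine Prod.ext ?_ (by simp)
    simp only [Prod.fst_add, Prod.fst_sub, Prod.smul_fst, sub_smul]
    rw [sub_eq_sub_iff_add_eq_add] at hz
    rw [← add_sub_assoc, sub_eq_iff_eq_add, hz]

end LineSections

theorem stmt_13 (n : ℕ) (hn : 2 ≤ n) (s : ℝ) (hs1 : (n : ℝ) - 1 < s) (hs2 : s ≤ n)
    (A : Set (EuclideanSpace ℝ (Fin n))) (hA : MeasurableSet A)
    (h0 : 0 < μH[s] A) (h1 : μH[s] A < ∞) :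
    ∃ B : Set (EuclideanSpace ℝ (Fin n)), MeasurableSet B ∧
      dimH B ≤ (n : ℝ≥0∞) - 1 ∧
      ∀ x ∉ B, 0 < μH[(n : ℝ) - 1]
        {e : EuclideanSpace ℝ (Fin n) | ‖e‖ = 1 ∧
          dimH (A ∩ {y | ∃ r : ℝ, y = x + r • e}) =
            ENNReal.ofReal (s - ((n : ℝ) - 1))} := by
  obtain ⟨m, rfl⟩ : ∃ m, n = m + 1 := ⟨n - 1, by omega⟩
  have hcast : ((m + 1 : ℕ) : ℝ) - 1 = m := by push_cast; ring
  have hcast' : ((m + 1 : ℕ) : ℝ≥0∞) - 1 = m := by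
    push_cast; exact ENNReal.add_sub_cancel_right (by simp)
  rw [hcast] at hs1
  simp only [hcast, hcast']
  have hs0 : 0 < s := m.cast_nonneg.trans_lt hs1
  let L : EuclideanSpace ℝ (Fin (m + 1)) ≃L[ℝ] (Fin m → ℝ) × ℝ :=
    ContinuousLinearEquiv.ofFinrankEq (by simp)
  have hLA : MeasurableSet (L '' A) := by
    rw [L.image_eq_preimage_symm]; exact L.symm.continuous.measurable hA
  have hL0 : 0 < μH[s] (L '' A) := by
    refine pos_iff_ne_zero.2 fun h => h0.ne' ?_
    have := L.symm.lipschitz.hausdorffMeasure_image_le hs0.le (L '' A)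
    rw [h, mul_zero, L.symm_image_image] at this
    exact nonpos_iff_eq_zero.1 this
  have hL1 : μH[s] (L '' A) < ∞ :=
    (L.lipschitz.hausdorffMeasure_image_le hs0.le A).trans_lt
      (ENNReal.mul_lt_top (ENNReal.rpow_lt_top_of_nonneg hs0.le (by simp)) h1)
  obtain ⟨B, hB, hx⟩ :=
    LineSections.exists_hausdorffMeasure_eq_zero_volume_section_ne_zero hs1 hLA hL0 hL1
  obtain ⟨B', hBB', hB'm, hB'd⟩ := LineSections.exists_measurableSet_superset_dimH_le
    (B := L.symm '' B) (m := m) fun t ht => by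
      have := L.symm.lipschitz.hausdorffMeasure_image_le (m.cast_nonneg.trans ht.le) B
      rw [hB t ht, mul_zero] at this
      exact nonpos_iff_eq_zero.1 this
  refine ⟨B', hB'm, hB'd, fun x hxB => pos_iff_ne_zero.2 fun hnull => ?_⟩
  have hLx : L x ∉ B := fun h => hxB (hBB' ⟨L x, h, L.symm_apply_apply x⟩)
  refine hx (L x) hLx ?_
  set G := {e : EuclideanSpace ℝ (Fin (m + 1)) | ‖e‖ = 1 ∧
    dimH (A ∩ {y | ∃ r : ℝ, y = x + r • e}) = ENNReal.ofReal (s - m)} with hG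
  have himg := LineSections.hausdorffMeasure_image_eq_zero_of_contDiffAt
    (f := fun e => (L e).2⁻¹ • (L e).1) (S := G ∩ {e | (L e).2 ≠ 0}) (d := m)
    (fun e he => ((contDiff_snd.comp L.contDiff).contDiffAt.inv he.2).smul
      (contDiff_fst.comp L.contDiff).contDiffAt)
    m.cast_nonneg (measure_mono_null inter_subset_left hnull)
  have hvol := hausdorffMeasure_pi_real (ι := Fin m)
  rw [Fintype.card_fin] at hvol
  rw [hvol] at himg
  refine measure_mono_null (fun u hu => ?_) himg
  set w := L.symm (u, 1) with hw
  have hw0 : w ≠ 0 := by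
    intro h
    have := congrArg (fun e => (L e).2) h
    simp [hw] at this
  have ha : ‖w‖⁻¹ ≠ 0 := inv_ne_zero (norm_ne_zero_iff.2 hw0)
  have hLe : L (‖w‖⁻¹ • w) = ‖w‖⁻¹ • (u, 1) := by rw [map_smul, hw, L.apply_symm_apply]
  refine ⟨‖w‖⁻¹ • w, ⟨⟨?_, ?_⟩, ?_⟩, ?_⟩
  · rw [norm_smul, norm_inv, norm_norm, inv_mul_cancel₀ (norm_ne_zero_iff.2 hw0)]
  · rw [← L.dimH_image, LineSections.image_line_eq L A x ha hLe]
    exact hu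
  · simpa [hLe] using hw0
  · simp only [hLe, Prod.smul_fst, Prod.smul_snd, smul_eq_mul, mul_one]
    exact inv_smul_smul₀ ha u
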